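/- arXiv:2502.17809 — 2 statements merged into one kernel-verified Lean document; each statement's English description precedes it below -/
import Mathlib

section
/- For every number of products m ≥ 1 and every value distribution f on ℝ_{≥0}^m with finite support, there exist a coarse horizontal disclosure σ with finite signal space S, a price vector p ∈ ℝ_{≥0}^m, and a selection rule a defined on the signals s with r(s) > 0, taking values in {1,…,m} ∪ {∅}, such that: (i) if a(s) = i then ν_i(s) − p_i ≥ 0 and ν_i(s) − p_i ≥ ν_{i'}(s) − p_{i'} for every i' (the buyer optimally purchases product i); (ii) if a(s) = ∅ then ν_{i'}(s) − p_{i'} ≤ 0 for every i' (the buyer optimally purchases nothing); and (iii) the revenue satisfies Σ_{s : a(s) ≠ ∅} r(s)·p_{a(s)} ≥ 0.5017 · E[max_{i∈[m]} v_i]. In particular, the pricing mechanism achieves at least 50.17% of the revenue of any IC-IR mechanism. -/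
open Finset

noncomputable section

namespace Screening

variable {m : ℕ} {ι : Type}

/-- The ex-ante probability of signal `s` under information structure `σ`. -/
def sigR (V : Finset (Fin m → ℝ)) (f : (Fin m → ℝ) → ℝ)
    (σ : (Fin m → ℝ) → ι → ℝ) (s : ι) : ℝ :=
  ∑ v ∈ V, f v * σ v s

/-- The posterior mean value of product `i` upon receiving signal `s`. -/
def post (V : Finset (Fin m → ℝ)) (f : (Fin m → ℝ) → ℝ)
    (σ : (Fin m → ℝ) → ι → ℝ) (s : ι) (i : Fin m) : ℝ :=
  (∑ v ∈ V, f v * σ v s * v i) / sigR V f σ s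

/-- `σ` is an information structure with finite signal space `S`. -/
def IsInfo (V : Finset (Fin m → ℝ)) (S : Finset ι)
    (σ : (Fin m → ℝ) → ι → ℝ) : Prop :=
  ∀ v ∈ V, (∀ s, 0 ≤ σ v s) ∧ (∀ s, s ∉ S → σ v s = 0) ∧ (∑ s ∈ S, σ v s = 1)

/-- `x` is a feasible (random, unit-demand) allocation rule on `S`. -/
def IsAlloc (S : Finset ι) (x : ι → Fin m → ℝ) : Prop :=
  ∀ s ∈ S, (∀ i, 0 ≤ x s i) ∧ (∀ i, x s i ≤ 1) ∧ (∑ i, x s i ≤ 1)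

/-- Incentive compatibility. -/
def IC (V : Finset (Fin m → ℝ)) (f : (Fin m → ℝ) → ℝ) (S : Finset ι)
    (σ : (Fin m → ℝ) → ι → ℝ) (x : ι → Fin m → ℝ) (p : ι → ℝ) : Prop :=
  ∀ s ∈ S, 0 < sigR V f σ s → ∀ s' ∈ S,
    (∑ i, post V f σ s i * x s' i) - p s' ≤ (∑ i, post V f σ s i * x s i) - p s

/-- Individual rationality. -/
def IR (V : Finset (Fin m → ℝ)) (f : (Fin m → ℝ) → ℝ) (S : Finset ι)
    (σ : (Fin m → ℝ) → ι → ℝ) (x : ι → Fin m → ℝ) (p : ι → ℝ) : Prop :=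
  ∀ s ∈ S, 0 < sigR V f σ s → 0 ≤ (∑ i, post V f σ s i * x s i) - p s

/-- Expected revenue of a mechanism. -/
def Rev (V : Finset (Fin m → ℝ)) (f : (Fin m → ℝ) → ℝ) (S : Finset ι)
    (σ : (Fin m → ℝ) → ι → ℝ) (p : ι → ℝ) : ℝ :=
  ∑ s ∈ S, sigR V f σ s * p s

/-- Nonemptiness of `Fin m` as a finset, given `0 < m`. -/
lemma univNe (hm : 0 < m) : (univ : Finset (Fin m)).Nonempty :=
  univ_nonempty_iff.mpr (Fin.pos_iff_nonempty.mp hm)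

/-- The maximum value `max_i v_i`. -/
def vmax (hm : 0 < m) (v : Fin m → ℝ) : ℝ :=
  univ.sup' (univNe hm) v

/-- The smallest-index maximizing coordinate of `v`. -/
def istar (hm : 0 < m) (v : Fin m → ℝ) : Fin m :=
  (univ.filter (fun i => ∀ j, v j ≤ v i)).min' (by
    obtain ⟨i, -, hi⟩ := Finset.exists_max_image (univ : Finset (Fin m)) v (univNe hm)
    exact ⟨i, mem_filter.mpr ⟨mem_univ _, fun j => hi j (mem_univ _)⟩⟩)

/-- The probability that product `i` is the (selected) highest-value product. -/
def probTop (V : Finset (Fin m → ℝ)) (f : (Fin m → ℝ) → ℝ)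
    (top : (Fin m → ℝ) → Fin m) (i : Fin m) : ℝ :=
  ∑ v ∈ V.filter (fun v => top v = i), f v

/-- The posterior mean value of product `j` conditional on `i` being the highest-value
product (i.e. conditional on the horizontal-disclosure signal `i`). -/
def condMean (V : Finset (Fin m → ℝ)) (f : (Fin m → ℝ) → ℝ)
    (top : (Fin m → ℝ) → Fin m) (i j : Fin m) : ℝ :=
  (∑ v ∈ V.filter (fun v => top v = i), f v * v j) / probTop V f top i

/-!
Normalize the welfare to `1`. A horizontal disclosure only sees, for each product, the probability
that it is best and the mean values given that it is, so products can be ranked by their conditional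
mean value. Selling at one price, with every product above the price pooled with as much of the
others as its surplus supports, raises the smaller of the price and the welfare of the products
above it. This suffices unless about half of the welfare sits on very rare high products while the
conditional mean of almost all other products is barely below `0.5017`.

In that case let `h` send surplus to a low product `l` when `h`, sold as `l`, keeps a good part of
its surplus, and take a blocking flow. If the flow is large, low products topped up with diverted
high ones sell at `0.55`, and each unit of flow earns more than the surplus it uses up. If the flow
is small, the saturated rows and columns are a negligible vertex cover. Outside it, no high product
is a substitute for a low one, so low products can be sold at `0.46` while the high ones, pooled
with a part of the low ones, still sell at `1.5`.
-/

universe u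

section OptimalPurchase

variable {α : Type u} {p w : α → ℝ}

/-- The purchase decision `o` is optimal for a buyer whose net utility from product `i` is `w i`
and who may also leave with nothing. -/
def IsOptimalPurchase (w : α → ℝ) (o : Option α) : Prop :=
  (∀ i, o = some i → 0 ≤ w i ∧ ∀ j, w j ≤ w i) ∧ (o = none → ∀ j, w j ≤ 0)

/-- At prices `p`, a buyer with net utilities `w` has an optimal purchase that pays at least `ρ`. -/
def Sells (p w : α → ℝ) (ρ : ℝ) : Prop :=
  ∃ o : Option α, IsOptimalPurchase w o ∧ ρ ≤ o.elim 0 p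

lemma isOptimalPurchase_some {i : α} (hi : 0 ≤ w i) (hmax : ∀ j, w j ≤ w i) :
    IsOptimalPurchase w (some i) :=
  ⟨by rintro _ ⟨⟩; exact ⟨hi, hmax⟩, by simp⟩

lemma IsOptimalPurchase.mul_right {o : Option α} (h : IsOptimalPurchase w o) {c : ℝ} (hc : 0 ≤ c) :
    IsOptimalPurchase (fun i => w i * c) o :=
  ⟨fun i hi => ⟨mul_nonneg (h.1 i hi).1 hc,
      fun j => mul_le_mul_of_nonneg_right ((h.1 i hi).2 j) hc⟩,
    fun hn j => mul_nonpos_of_nonpos_of_nonneg (h.2 hn j) hc⟩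

lemma sells_zero [Finite α] (hp : ∀ i, 0 ≤ p i) : Sells p w 0 := by
  by_cases hneg : ∀ j, w j ≤ 0
  · exact ⟨none, ⟨by simp, fun _ => hneg⟩, le_rfl⟩
  · push Not at hneg
    obtain ⟨j, hj⟩ := hneg
    have : Nonempty α := ⟨j⟩
    obtain ⟨i, hi⟩ := Finite.exists_max w
    exact ⟨some i, isOptimalPurchase_some (hj.le.trans (hi j)) hi, hp i⟩

lemma sells_of_forall_cheaper_le [Finite α] {ρ : ℝ} {h : α} (hρ : ρ ≤ p h) (hh : 0 ≤ w h)
    (hcheaper : ∀ j, p j < ρ → w j ≤ w h) : Sells p w ρ := by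
  have : Nonempty α := ⟨h⟩
  obtain ⟨i, hi⟩ := Finite.exists_max w
  rcases lt_or_ge (p i) ρ with hlt | hge
  · exact ⟨some h, isOptimalPurchase_some hh fun j => (hi j).trans (hcheaper i hlt), hρ⟩
  · exact ⟨some i, isOptimalPurchase_some (hh.trans (hi h)) hi, hge⟩

end OptimalPurchase

/-- A coarse horizontal disclosure over the products `α` with signals labelled by `K`: when `i` is
the best product, the label `k` is drawn with probability `share k i` and the set `signal k` is
announced. -/
structure Disclosure (α K : Type u) [Fintype K] where
  signal : K → Finset α
  share : K → α → ℝ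
  signal_injective : Function.Injective signal
  signal_nonempty : ∀ k, (signal k).Nonempty
  share_nonneg : ∀ k i, 0 ≤ share k i
  mem_signal_of_share_ne_zero : ∀ k i, share k i ≠ 0 → i ∈ signal k
  sum_share : ∀ i, ∑ k, share k i = 1

namespace Disclosure

variable {α K : Type u} [Fintype K] (D : Disclosure α K)

/-- The announced-set form `τ` of a disclosure: `D.kernel i s` is the probability of announcing `s`
when `i` is the best product. -/
def kernel (i : α) : Finset α → ℝ :=
  Function.extend D.signal (fun k => D.share k i) 0

lemma kernel_signal (i : α) (k : K) : D.kernel i (D.signal k) = D.share k i :=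
  D.signal_injective.extend_apply _ _ _

lemma kernel_eq_zero_of_forall_ne {s : Finset α} (hs : ∀ k, D.signal k ≠ s) (i : α) :
    D.kernel i s = 0 :=
  Function.extend_apply' _ _ _ fun ⟨k, hk⟩ => hs k hk

lemma kernel_nonneg (i : α) (s : Finset α) : 0 ≤ D.kernel i s := by
  by_cases hs : ∃ k, D.signal k = s
  · obtain ⟨k, rfl⟩ := hs
    exact (D.kernel_signal i k).symm ▸ D.share_nonneg k i
  · exact (D.kernel_eq_zero_of_forall_ne (not_exists.mp hs) i).ge

lemma mem_of_kernel_pos {i : α} {s : Finset α} (h : 0 < D.kernel i s) : i ∈ s := by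
  by_cases hs : ∃ k, D.signal k = s
  · obtain ⟨k, rfl⟩ := hs
    rw [D.kernel_signal] at h
    exact D.mem_signal_of_share_ne_zero k i h.ne'
  · exact absurd (D.kernel_eq_zero_of_forall_ne (not_exists.mp hs) i) h.ne'

/-- The disclosure that reveals nothing. -/
def noInformation (α : Type u) [Fintype α] [Nonempty α] :
    Disclosure α PUnit.{u + 1} where
  signal _ := univ
  share _ _ := 1
  signal_injective _ _ _ := rfl
  signal_nonempty _ := univ_nonempty
  share_nonneg _ _ := zero_le_one
  mem_signal_of_share_ne_zero _ i _ := mem_univ i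
  sum_share _ := by simp

variable [DecidableEq α]

/-- The sets a disclosure may announce. -/
def signals : Finset (Finset α) := univ.image D.signal

lemma nonempty_of_mem_signals {s : Finset α} (hs : s ∈ D.signals) : s.Nonempty := by
  obtain ⟨k, -, rfl⟩ := mem_image.mp hs
  exact D.signal_nonempty k

lemma kernel_eq_zero_of_notMem_signals {s : Finset α} (hs : s ∉ D.signals) (i : α) :
    D.kernel i s = 0 :=
  D.kernel_eq_zero_of_forall_ne (fun k hk => hs (mem_image.mpr ⟨k, mem_univ k, hk⟩)) i

lemma sum_signals (g : Finset α → ℝ) : ∑ s ∈ D.signals, g s = ∑ k, g (D.signal k) :=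
  sum_image D.signal_injective.injOn

lemma sum_kernel (i : α) : ∑ s ∈ D.signals, D.kernel i s = 1 := by
  rw [D.sum_signals, ← D.sum_share i]
  exact sum_congr rfl fun k _ => D.kernel_signal i k

end Disclosure

/-- What a horizontal disclosure depends on in a value distribution: `mass i` is the probability
`P(i* = i)` that `i` is the best product and `value i j` is the unnormalized mean
`E[v_j ; i* = i]`, so that conditional means are quotients `value i j / mass i`. -/
structure Market (α : Type u) [Fintype α] where
  mass : α → ℝ
  value : α → α → ℝ
  mass_nonneg : ∀ i, 0 ≤ mass i
  sum_mass : ∑ i, mass i = 1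
  value_nonneg : ∀ i j, 0 ≤ value i j
  value_le_value_self : ∀ i j, value i j ≤ value i i

namespace Market

variable {α : Type u} [Fintype α] (M : Market α)

/-- The net utility of product `j` at prices `p`, times the probability of the signal, for a
signal that is sent with probability `x i` when `i` is the best product. -/
def surplus (p x : α → ℝ) (j : α) : ℝ :=
  ∑ i, x i * (M.value i j - p j * M.mass i)

/-- Some disclosure and nonnegative prices, with an optimally purchasing buyer, earn at least
`R`. -/
def Attains (R : ℝ) : Prop :=
  ∃ (K : Type u) (_ : Fintype K) (D : Disclosure α K) (p : α → ℝ) (a : K → Option α),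
    (∀ i, 0 ≤ p i) ∧ (∀ k, IsOptimalPurchase (M.surplus p (D.share k)) (a k)) ∧
      R ≤ ∑ k, (∑ i, D.share k i * M.mass i) * (a k).elim 0 p

variable {M}

lemma Attains.mono {R R' : ℝ} (h : M.Attains R) (hR : R' ≤ R) : M.Attains R' := by
  obtain ⟨K, _, D, p, a, hp, ha, hrev⟩ := h
  exact ⟨K, _, D, p, a, hp, ha, hR.trans hrev⟩

variable (M)

lemma attains_of_sells {K : Type u} [Fintype K] (D : Disclosure α K) {p : α → ℝ}
    (hp : ∀ i, 0 ≤ p i) {ρ : K → ℝ} (hsells : ∀ k, Sells p (M.surplus p (D.share k)) (ρ k)) :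
    M.Attains (∑ k, (∑ i, D.share k i * M.mass i) * ρ k) := by
  choose a ha hρ using hsells
  exact ⟨K, _, D, p, a, hp, ha, sum_le_sum fun k _ => mul_le_mul_of_nonneg_left (hρ k) <|
    sum_nonneg fun i _ => mul_nonneg (D.share_nonneg k i) (M.mass_nonneg i)⟩

/-- The market in which all values are divided by `W`. -/
def rescale {W : ℝ} (hW : 0 ≤ W) : Market α where
  mass := M.mass
  value i j := M.value i j / W
  mass_nonneg := M.mass_nonneg
  sum_mass := M.sum_mass
  value_nonneg i j := div_nonneg (M.value_nonneg i j) hW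
  value_le_value_self i j := div_le_div_of_nonneg_right (M.value_le_value_self i j) hW

lemma surplus_rescale_mul {W : ℝ} (hW : 0 < W) (p x : α → ℝ) (j : α) :
    (M.rescale hW.le).surplus p x j * W = M.surplus (fun i => p i * W) x j := by
  simp only [surplus, rescale, sum_mul]
  refine sum_congr rfl fun i _ => ?_
  field_simp

variable {M} in
lemma Attains.of_rescale {W R : ℝ} (hW : 0 < W) (h : (M.rescale hW.le).Attains R) :
    M.Attains (R * W) := by
  obtain ⟨K, _, D, p, a, hp, ha, hrev⟩ := h
  refine ⟨K, _, D, fun i => p i * W, a, fun i => mul_nonneg (hp i) hW.le, fun k => ?_, ?_⟩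
  · simpa only [M.surplus_rescale_mul hW] using (ha k).mul_right hW.le
  · refine (mul_le_mul_of_nonneg_right hrev hW.le).trans_eq ?_
    rw [sum_mul]
    refine sum_congr rfl fun k _ => ?_
    rw [mul_assoc]
    cases a k <;> simp [rescale]

lemma attains_sum_value (j : α) : M.Attains (∑ i, M.value i j) := by
  have : Nonempty α := ⟨j⟩
  set P := ∑ i, M.value i j with hP
  have hP0 : 0 ≤ P := sum_nonneg fun i _ => M.value_nonneg i j
  have hsells : ∀ k, Sells (fun _ => P)
      (M.surplus (fun _ => P) ((Disclosure.noInformation α).share k)) P := by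
    refine fun k => sells_of_forall_cheaper_le (h := j) le_rfl (le_of_eq ?_)
      fun i hi => absurd hi (lt_irrefl P)
    simp [surplus, Disclosure.noInformation, ← mul_sum, M.sum_mass, hP]
  refine (M.attains_of_sells _ (fun _ => hP0) hsells).mono (le_of_eq ?_)
  simp [Disclosure.noInformation, M.sum_mass]

end Market

section Flow

variable {ι κ : Type*}

/-- `z` is a flow from the rows `H` to the columns `L` of a bipartite graph, with supplies `A` and
demand capacities `B`. -/
structure IsFlow (H : Finset ι) (L : Finset κ) (A : ι → ℝ) (B : κ → ℝ) (z : ι → κ → ℝ) :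
    Prop where
  nonneg : ∀ h l, 0 ≤ z h l
  row_le : ∀ h ∈ H, ∑ l ∈ L, z h l ≤ A h
  col_le : ∀ l ∈ L, ∑ h ∈ H, z h l ≤ B l

variable {H : Finset ι} {L : Finset κ} {A : ι → ℝ} {B : κ → ℝ} {z : ι → κ → ℝ}

lemma IsFlow.swap (hz : IsFlow H L A B z) : IsFlow L H B A (fun l h => z h l) :=
  ⟨fun l h => hz.nonneg h l, hz.col_le, hz.row_le⟩

lemma IsFlow.div_supply_mul_cancel (hz : IsFlow H L A B z) {h : ι} (hh : h ∈ H) {l : κ}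
    (hl : l ∈ L) : z h l / A h * A h = z h l :=
  div_mul_cancel_of_imp fun h0 => (((single_le_sum (fun l _ => hz.nonneg h l) hl).trans
    (hz.row_le h hh)).trans h0.le).antisymm (hz.nonneg h l)

lemma IsFlow.sum_div_demand_mul_cancel (hz : IsFlow H L A B z) {l : κ} (hl : l ∈ L) :
    (∑ h ∈ H, z h l) / B l * B l = ∑ h ∈ H, z h l :=
  div_mul_cancel_of_imp fun h0 =>
    ((hz.col_le l hl).trans h0.le).antisymm (sum_nonneg fun h _ => hz.nonneg h l)

lemma IsFlow.sum_saturated_rows_le (hz : IsFlow H L A B z) :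
    ∑ h ∈ H with ∑ l ∈ L, z h l = A h, A h ≤ ∑ h ∈ H, ∑ l ∈ L, z h l := by
  rw [← sum_congr rfl fun h hh => (mem_filter.mp hh).2]
  exact sum_le_sum_of_subset_of_nonneg (filter_subset _ _) fun h _ _ =>
    sum_nonneg fun l _ => hz.nonneg h l

lemma IsFlow.sum_saturated_cols_le (hz : IsFlow H L A B z) :
    ∑ l ∈ L with ∑ h ∈ H, z h l = B l, B l ≤ ∑ h ∈ H, ∑ l ∈ L, z h l :=
  hz.swap.sum_saturated_rows_le.trans_eq sum_comm

/-- Pushing along the edge `(h, l)` until its row or its column is saturated. -/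
lemma IsFlow.exists_augment (hz : IsFlow H L A B z) {h : ι} (hh : h ∈ H) {l : κ} (hl : l ∈ L) :
    ∃ z', IsFlow H L A B z' ∧ (∀ a b, z a b ≤ z' a b) ∧
      (∀ a b, (a, b) ≠ (h, l) → z' a b = z a b) ∧
      (∑ b ∈ L, z' h b = A h ∨ ∑ a ∈ H, z' a l = B l) := by
  classical
  set ε := min (A h - ∑ b ∈ L, z h b) (B l - ∑ a ∈ H, z a l) with hε
  have hε0 : 0 ≤ ε := le_min (sub_nonneg.mpr (hz.row_le h hh)) (sub_nonneg.mpr (hz.col_le l hl))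
  have hrow : ∀ a, ∑ b ∈ L, (z a b + if a = h ∧ b = l then ε else 0) =
      ∑ b ∈ L, z a b + if a = h then ε else 0 := fun a => by
    by_cases ha : a = h <;> simp [sum_add_distrib, ha, hl]
  have hcol : ∀ b, ∑ a ∈ H, (z a b + if a = h ∧ b = l then ε else 0) =
      ∑ a ∈ H, z a b + if b = l then ε else 0 := fun b => by
    by_cases hb : b = l <;> simp [sum_add_distrib, hb, hh]
  refine ⟨fun a b => z a b + if a = h ∧ b = l then ε else 0, ⟨?_, ?_, ?_⟩, ?_, ?_, ?_⟩
  · exact fun a b => add_nonneg (hz.nonneg a b) (by split_ifs <;> simp [hε0])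
  · intro a ha
    rw [hrow]
    split_ifs with hah
    · subst hah; linarith [min_le_left (A a - ∑ b ∈ L, z a b) (B l - ∑ a ∈ H, z a l)]
    · simpa using hz.row_le a ha
  · intro b hb
    rw [hcol]
    split_ifs with hbl
    · subst hbl; linarith [min_le_right (A h - ∑ b ∈ L, z h b) (B b - ∑ a ∈ H, z a b)]
    · simpa using hz.col_le b hb
  · exact fun a b => le_add_of_nonneg_right (by split_ifs <;> simp [hε0])
  · intro a b hab
    simp [show ¬ (a = h ∧ b = l) from fun h' => hab (Prod.ext h'.1 h'.2)]
  · rw [hrow, hcol, if_pos rfl, if_pos rfl]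
    rcases min_choice (A h - ∑ b ∈ L, z h b) (B l - ∑ a ∈ H, z a l) with h' | h'
    · left; linarith
    · right; linarith

lemma exists_isFlow_saturating (hA : ∀ h ∈ H, 0 ≤ A h) (hB : ∀ l ∈ L, 0 ≤ B l)
    (s : Finset (ι × κ)) (hs : s ⊆ H ×ˢ L) :
    ∃ z, IsFlow H L A B z ∧ (∀ h l, z h l ≠ 0 → (h, l) ∈ s) ∧
      ∀ e ∈ s, ∑ l ∈ L, z e.1 l = A e.1 ∨ ∑ h ∈ H, z h e.2 = B e.2 := by
  classical
  induction s using Finset.induction_on with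
  | empty => exact ⟨fun _ _ => 0, ⟨by simp, by simpa using hA, by simpa using hB⟩, by simp, by simp⟩
  | insert e s _ ih =>
    obtain ⟨z, hz, hsupp, hsat⟩ := ih ((subset_insert e s).trans hs)
    obtain ⟨he₁, he₂⟩ := mem_product.mp (hs (mem_insert_self e s))
    obtain ⟨z', hz', hle, hne, hsat'⟩ := hz.exists_augment he₁ he₂
    refine ⟨z', hz', fun a b hab => ?_, fun e' he' => ?_⟩
    · by_cases heq : (a, b) = e
      · exact heq ▸ mem_insert_self _ _
      · exact mem_insert_of_mem (hsupp a b (hne a b heq ▸ hab))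
    · rcases mem_insert.mp he' with rfl | he's
      · exact hsat'
      · obtain ⟨hh, hl⟩ := mem_product.mp (hs he')
        refine (hsat e' he's).imp (fun h => ?_) (fun h => ?_)
        · exact (hz'.row_le _ hh).antisymm (h.ge.trans (sum_le_sum fun b _ => hle _ b))
        · exact (hz'.col_le _ hl).antisymm (h.ge.trans (sum_le_sum fun a _ => hle a _))

lemma exists_isFlow_forall_edge_saturated (E : ι → κ → Prop) (hA : ∀ h ∈ H, 0 ≤ A h)
    (hB : ∀ l ∈ L, 0 ≤ B l) :
    ∃ z, IsFlow H L A B z ∧ (∀ h l, z h l ≠ 0 → E h l) ∧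
      ∀ h ∈ H, ∀ l ∈ L, E h l → ∑ l' ∈ L, z h l' = A h ∨ ∑ h' ∈ H, z h' l = B l := by
  classical
  obtain ⟨z, hz, hsupp, hsat⟩ := exists_isFlow_saturating hA hB
    {e ∈ H ×ˢ L | E e.1 e.2} (filter_subset _ _)
  exact ⟨z, hz, fun h l hne => (mem_filter.mp (hsupp h l hne)).2,
    fun h hh l hl hE => hsat (h, l) (mem_filter.mpr ⟨mem_product.mpr ⟨hh, hl⟩, hE⟩)⟩

/-- Splitting a load `A` in proportion to the capacities `r`, scaled down if they are in excess. -/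
lemma exists_proportional_weights (s : Finset ι) {r : ι → ℝ} (hr : ∀ i ∈ s, 0 ≤ r i) {A : ℝ}
    (hA : 0 ≤ A) :
    ∃ c : ι → ℝ, (∀ i ∈ s, 0 ≤ c i) ∧ ∑ i ∈ s, c i ≤ 1 ∧ (∀ i ∈ s, c i * A ≤ r i) ∧
      (∑ i ∈ s, c i) * A = min A (∑ i ∈ s, r i) := by
  set G := ∑ i ∈ s, r i
  have hG0 : 0 ≤ G := sum_nonneg hr
  have hmax : 0 ≤ max A G := hA.trans (le_max_left A G)
  have hsum : ∑ i ∈ s, r i / max A G = G / max A G := by rw [← sum_div]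
  refine ⟨fun i => r i / max A G, fun i hi => div_nonneg (hr i hi) hmax, ?_, fun i hi => ?_, ?_⟩
  · rw [hsum]
    exact div_le_one_of_le₀ (le_max_right A G) hmax
  · rw [div_mul_eq_mul_div]
    exact div_le_of_le_mul₀ hmax (hr i hi)
      (mul_le_mul_of_nonneg_left (le_max_left A G) (hr i hi))
  · rw [hsum, div_mul_eq_mul_div, mul_comm G A, ← min_mul_max A G]
    refine mul_div_cancel_of_imp fun h0 => le_antisymm ?_ (le_min hA hG0)
    exact (min_le_left A G).trans ((le_max_left A G).trans h0.le)

end Flow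

section Pooling

variable {α : Type u} [DecidableEq α]

/-- The probability of the label `k` when `i` is the best product and the labels `k : α` have total
probability `κ i` to distribute: the label of a high product `h ∈ H` absorbs the fraction `c h` of
every low product. -/
def poolShare (H : Finset α) (κ c : α → ℝ) (k i : α) : ℝ :=
  if k ∈ H then (if i = k then κ i else 0) + (if i ∈ H then 0 else c k * κ i)
  else if i = k then (1 - ∑ h ∈ H, c h) * κ i else 0

variable {H : Finset α} {κ c : α → ℝ}

lemma poolShare_nonneg (hκ : ∀ i, 0 ≤ κ i) (hc : ∀ h ∈ H, 0 ≤ c h) (hc1 : ∑ h ∈ H, c h ≤ 1)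
    (k i : α) : 0 ≤ poolShare H κ c k i := by
  rw [poolShare]
  split_ifs with hk
  · exact add_nonneg (hκ i) le_rfl
  · exact add_nonneg (hκ i) (mul_nonneg (hc k hk) (hκ i))
  · exact add_nonneg le_rfl le_rfl
  · exact add_nonneg le_rfl (mul_nonneg (hc k hk) (hκ i))
  · exact mul_nonneg (sub_nonneg.mpr hc1) (hκ i)
  · exact le_rfl

/-- The price vector charging `t` for the products in `B` and `P` for all others. -/
def twoPrice (B : Finset α) (t P : ℝ) (i : α) : ℝ := if i ∈ B then t else P

/-- The price paid at the label `k` of `poolShare H` under `twoPrice B t P`: the high products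
sell at `P`, those in `B` at `t`, and nothing else is sold. -/
def poolRevenue (H B : Finset α) (t P : ℝ) (k : α) : ℝ :=
  if k ∈ H then P else if k ∈ B then t else 0

lemma twoPrice_nonneg {B : Finset α} {t P : ℝ} (ht : 0 ≤ t) (htP : t ≤ P) (i : α) :
    0 ≤ twoPrice B t P i := by
  rw [twoPrice]
  split_ifs
  exacts [ht, ht.trans htP]

variable [Fintype α]

/-- The announced set of the label `k` when `H` is the set of high products: a high product is
pooled with all low products, while a low product is announced on its own. -/
def poolSignal (H : Finset α) (k : α) : Finset α :=
  if k ∈ H then insert k Hᶜ else {k}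

lemma self_mem_poolSignal (k : α) : k ∈ poolSignal H k := by
  by_cases hk : k ∈ H <;> simp [poolSignal, hk]

lemma poolSignal_injective (H : Finset α) : Function.Injective (poolSignal H) := by
  intro k l hkl
  have hk : k ∈ poolSignal H l := hkl ▸ self_mem_poolSignal k
  have hl : l ∈ poolSignal H k := hkl ▸ self_mem_poolSignal l
  by_cases hkH : k ∈ H
  · by_cases hlH : l ∈ H
    · simpa [poolSignal, hlH, hkH] using hk
    · simpa [poolSignal, hlH] using hk
  · exact (by simpa [poolSignal, hkH] using hl : l = k).symm

lemma mem_poolSignal_of_poolShare_ne_zero {k i : α} (h : poolShare H κ c k i ≠ 0) :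
    i ∈ poolSignal H k := by
  by_cases hik : i = k
  · exact hik ▸ self_mem_poolSignal i
  · by_cases hk : k ∈ H <;> by_cases hi : i ∈ H <;> simp_all [poolShare, poolSignal]

lemma sum_poolShare (i : α) : ∑ k, poolShare H κ c k i = κ i := by
  rw [← sum_add_sum_compl H]
  have hH : ∑ k ∈ H, poolShare H κ c k i =
      ∑ k ∈ H, ((if i = k then κ i else 0) + (if i ∈ H then 0 else c k * κ i)) :=
    sum_congr rfl fun k hk => if_pos hk
  have hL : ∑ k ∈ Hᶜ, poolShare H κ c k i =
      ∑ k ∈ Hᶜ, if i = k then (1 - ∑ h ∈ H, c h) * κ i else 0 :=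
    sum_congr rfl fun k hk => if_neg (mem_compl.mp hk)
  rw [hH, hL, sum_add_distrib, sum_ite_eq, sum_ite_eq]
  by_cases hi : i ∈ H
  · simp [hi]
  · simp only [hi, if_false, mem_compl, not_false_iff, if_true, ← sum_mul]
    ring

lemma sum_poolShare_mul_of_mem {k : α} (hk : k ∈ H) (g : α → ℝ) :
    ∑ i, poolShare H κ c k i * g i = κ k * g k + c k * ∑ i ∈ Hᶜ, κ i * g i := by
  have hsplit : ∀ i, poolShare H κ c k i * g i =
      (if i = k then κ i * g i else 0) + if i ∈ Hᶜ then c k * (κ i * g i) else 0 := fun i => by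
    by_cases hi : i ∈ H <;> by_cases hik : i = k <;> (simp [poolShare, hk, hi, hik]; try ring)
  simp only [hsplit, sum_add_distrib, sum_ite_eq', sum_ite_mem, mem_univ, if_true, univ_inter,
    mul_sum]

lemma sum_poolShare_mul_of_notMem {k : α} (hk : k ∉ H) (g : α → ℝ) :
    ∑ i, poolShare H κ c k i * g i = (1 - ∑ h ∈ H, c h) * (κ k * g k) := by
  simp [poolShare, hk, mul_assoc]

/-- Every high product `h` is pooled with the fraction `c h` of all low products. -/
def poolDisclosure (H : Finset α) (c : α → ℝ) (hc : ∀ h ∈ H, 0 ≤ c h)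
    (hc1 : ∑ h ∈ H, c h ≤ 1) : Disclosure α α where
  signal := poolSignal H
  share := poolShare H 1 c
  signal_injective := poolSignal_injective H
  signal_nonempty k := ⟨k, self_mem_poolSignal k⟩
  share_nonneg := poolShare_nonneg (fun _ => zero_le_one) hc hc1
  mem_signal_of_share_ne_zero _ _ := mem_poolSignal_of_poolShare_ne_zero
  sum_share := sum_poolShare

lemma sum_poolShare_mul_poolRevenue {B : Finset α} (hBH : Disjoint B H) (t P : ℝ) (g : α → ℝ) :
    ∑ k, (∑ i, poolShare H κ c k i * g i) * poolRevenue H B t P k =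
      P * (∑ i ∈ H, κ i * g i + (∑ h ∈ H, c h) * ∑ i ∈ Hᶜ, κ i * g i) +
        t * ((1 - ∑ h ∈ H, c h) * ∑ i ∈ B, κ i * g i) := by
  have hsplit : ∀ k, (∑ i, poolShare H κ c k i * g i) * poolRevenue H B t P k =
      (if k ∈ H then (κ k * g k + c k * ∑ i ∈ Hᶜ, κ i * g i) * P else 0) +
      (if k ∈ B then (1 - ∑ h ∈ H, c h) * (κ k * g k) * t else 0) := by
    intro k
    by_cases hk : k ∈ H
    · simp [poolRevenue, hk, sum_poolShare_mul_of_mem hk, disjoint_right.mp hBH hk]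
    · by_cases hkB : k ∈ B <;> simp [poolRevenue, hk, sum_poolShare_mul_of_notMem hk, hkB]
  simp only [hsplit, sum_add_distrib, sum_ite_mem, univ_inter, ← sum_mul, ← mul_sum]
  ring

end Pooling

namespace Market

variable {α : Type u} [Fintype α] [DecidableEq α] (M : Market α)
  {H B : Finset α} {κ c : α → ℝ} {t P : ℝ}

lemma surplus_poolShare_of_mem (p : α → ℝ) {k : α} (hk : k ∈ H) (j : α) :
    M.surplus p (poolShare H κ c k) j = κ k * (M.value k j - p j * M.mass k) +
      c k * ∑ i ∈ Hᶜ, κ i * (M.value i j - p j * M.mass i) :=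
  sum_poolShare_mul_of_mem hk _

lemma surplus_poolShare_of_notMem (p : α → ℝ) {k : α} (hk : k ∉ H) (j : α) :
    M.surplus p (poolShare H κ c k) j =
      (1 - ∑ h ∈ H, c h) * (κ k * (M.value k j - p j * M.mass k)) :=
  sum_poolShare_mul_of_notMem hk _

lemma le_surplus_poolShare (hκ : ∀ i, 0 ≤ κ i) {p : α → ℝ} {k : α} (hk : k ∈ H)
    (hck : 0 ≤ c k) :
    κ k * (M.value k k - p k * M.mass k) - c k * (p k * ∑ i ∈ Hᶜ, κ i * M.mass i) ≤
      M.surplus p (poolShare H κ c k) k := by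
  have hlow : -(p k * ∑ i ∈ Hᶜ, κ i * M.mass i) ≤
      ∑ i ∈ Hᶜ, κ i * (M.value i k - p k * M.mass i) := by
    rw [mul_sum, ← sum_neg_distrib]
    exact sum_le_sum fun i _ => by linarith [mul_nonneg (hκ i) (M.value_nonneg i k)]
  rw [M.surplus_poolShare_of_mem p hk]
  linarith [mul_le_mul_of_nonneg_left hlow hck]

lemma surplus_poolShare_le (hκ : ∀ i, 0 ≤ κ i) {p : α → ℝ} {k : α} (hk : k ∈ H) (hck : 0 ≤ c k)
    (j : α) :
    M.surplus p (poolShare H κ c k) j ≤ κ k * (M.value k j - p j * M.mass k) +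
      c k * ∑ i ∈ Hᶜ, κ i * (M.value i i - p j * M.mass i) := by
  rw [M.surplus_poolShare_of_mem p hk]
  gcongr with i
  · exact hκ i
  · exact M.value_le_value_self i j

lemma sells_poolShare_of_mem (hκ : ∀ i, 0 ≤ κ i) (hBH : Disjoint B H) {k : α} (hk : k ∈ H)
    (hck : 0 ≤ c k)
    (hbuy : c k * (P * ∑ i ∈ Hᶜ, κ i * M.mass i) ≤ κ k * (M.value k k - P * M.mass k))
    (hstay : ∀ j ∈ B, c k * ∑ i ∈ Hᶜ, κ i * (M.value i i + (P - t) * M.mass i) +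
      κ k * (M.value k j - t * M.mass k) ≤ κ k * (M.value k k - P * M.mass k)) :
    Sells (twoPrice B t P) (M.surplus (twoPrice B t P) (poolShare H κ c k)) P := by
  have hpk : twoPrice B t P k = P := if_neg (disjoint_right.mp hBH hk)
  have hlow := M.le_surplus_poolShare hκ (p := twoPrice B t P) hk hck
  rw [hpk] at hlow
  refine sells_of_forall_cheaper_le (h := k) hpk.ge (by linarith) fun j hj => ?_
  have hjB : j ∈ B := by_contra fun h => hj.ne (if_neg h)
  have hpj : twoPrice B t P j = t := if_pos hjB
  have hup := M.surplus_poolShare_le hκ (p := twoPrice B t P) hk hck j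
  have hsum : ∑ i ∈ Hᶜ, κ i * (M.value i i + (P - t) * M.mass i) =
      ∑ i ∈ Hᶜ, κ i * (M.value i i - t * M.mass i) + P * ∑ i ∈ Hᶜ, κ i * M.mass i := by
    rw [mul_sum, ← sum_add_distrib]
    exact sum_congr rfl fun i _ => by ring
  have hj' := hstay j hjB
  rw [hsum] at hj'
  rw [hpj] at hup
  linarith

lemma sells_poolShare (hκ : ∀ i, 0 ≤ κ i) (ht : 0 ≤ t) (htP : t ≤ P) (hBH : Disjoint B H)
    (hB : ∀ i ∈ B, t * M.mass i ≤ M.value i i)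
    (hc : ∀ h ∈ H, 0 ≤ c h) (hc1 : ∑ h ∈ H, c h ≤ 1)
    (hbuy : ∀ h ∈ H, c h * (P * ∑ i ∈ Hᶜ, κ i * M.mass i) ≤ κ h * (M.value h h - P * M.mass h))
    (hstay : ∀ h ∈ H, ∀ j ∈ B, c h * ∑ i ∈ Hᶜ, κ i * (M.value i i + (P - t) * M.mass i) +
      κ h * (M.value h j - t * M.mass h) ≤ κ h * (M.value h h - P * M.mass h)) (k : α) :
    Sells (twoPrice B t P) (M.surplus (twoPrice B t P) (poolShare H κ c k))
      (poolRevenue H B t P k) := by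
  rw [poolRevenue]
  split_ifs with hk hkB
  · exact M.sells_poolShare_of_mem hκ hBH hk (hc k hk) (hbuy k hk) (hstay k hk)
  · have hpk : twoPrice B t P k = t := if_pos hkB
    refine sells_of_forall_cheaper_le (h := k) hpk.ge ?_ fun j hj => absurd hj (not_lt.mpr ?_)
    · rw [M.surplus_poolShare_of_notMem _ hk, hpk]
      exact mul_nonneg (sub_nonneg.mpr hc1) (mul_nonneg (hκ k) (sub_nonneg.mpr (hB k hkB)))
    · rw [twoPrice]
      split_ifs
      exacts [le_rfl, htP]
  · exact sells_zero (twoPrice_nonneg ht htP)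

lemma attains_two_price (ht : 0 ≤ t) (htP : t ≤ P) (hBH : Disjoint B H)
    (hB : ∀ i ∈ B, t * M.mass i ≤ M.value i i)
    (hc : ∀ h ∈ H, 0 ≤ c h) (hc1 : ∑ h ∈ H, c h ≤ 1)
    (hbuy : ∀ h ∈ H, c h * (P * ∑ i ∈ Hᶜ, M.mass i) ≤ M.value h h - P * M.mass h)
    (hstay : ∀ h ∈ H, ∀ j ∈ B, c h * ∑ i ∈ Hᶜ, (M.value i i + (P - t) * M.mass i) +
      (M.value h j - t * M.mass h) ≤ M.value h h - P * M.mass h) :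
    M.Attains (P * (∑ i ∈ H, M.mass i + (∑ h ∈ H, c h) * ∑ i ∈ Hᶜ, M.mass i) +
      t * ((1 - ∑ h ∈ H, c h) * ∑ i ∈ B, M.mass i)) := by
  have hsells := M.sells_poolShare (κ := 1) (fun _ => zero_le_one) ht htP hBH hB hc hc1
    (by simpa using hbuy) (by simpa using hstay)
  refine (M.attains_of_sells (poolDisclosure H c hc hc1) (twoPrice_nonneg ht htP) hsells).mono ?_
  have hrev := sum_poolShare_mul_poolRevenue (κ := 1) (c := c) hBH t P M.mass
  simp only [Pi.one_apply, one_mul] at hrev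
  exact hrev.ge

end Market

namespace Market

variable {α : Type u} [Fintype α] (M : Market α) {H : Finset α} {P : ℝ}

lemma attains_min_uniform_price (hP : 0 ≤ P) (hH : ∀ h ∈ H, P * M.mass h ≤ M.value h h) :
    M.Attains (min P (∑ h ∈ H, M.value h h)) := by
  classical
  have hQ : ∑ i ∈ H, M.mass i + ∑ i ∈ Hᶜ, M.mass i = 1 := by
    rw [sum_add_sum_compl, M.sum_mass]
  obtain ⟨c, hc, hc1, hbuy, hmin⟩ := exists_proportional_weights H
    (r := fun h => M.value h h - P * M.mass h) (fun h hh => sub_nonneg.mpr (hH h hh))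
    (mul_nonneg hP (sum_nonneg fun i (_ : i ∈ Hᶜ) => M.mass_nonneg i))
  refine (M.attains_two_price (B := ∅) (t := 0) le_rfl hP (disjoint_empty_left H) (by simp) hc hc1
    hbuy (by simp)).mono (le_of_eq ?_)
  rw [sum_sub_distrib, ← mul_sum] at hmin
  calc min P (∑ h ∈ H, M.value h h)
      = P * ∑ i ∈ H, M.mass i +
          min (P * ∑ i ∈ Hᶜ, M.mass i) (∑ h ∈ H, M.value h h - P * ∑ i ∈ H, M.mass i) := by
        rw [← min_add_add_left, ← mul_add, hQ, mul_one, add_sub_cancel]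
    _ = _ := by rw [← hmin]; ring

end Market

section Diversion

variable {α : Type u} [DecidableEq α] {H : Finset α} {y : α → α → ℝ} {b c : α → ℝ}

/-- The probability of the label of the low product `l` when `i` is the best product: the share
`y h l` of each high product `h` is diverted to `l` and joined there with the share `b l` of `l`. -/
def divertShare (H : Finset α) (y : α → α → ℝ) (b : α → ℝ) (l i : α) : ℝ :=
  if i ∈ H then y i l else if i = l then b i else 0

lemma mem_insert_of_divertShare_ne_zero {l i : α} (h : divertShare H y b l i ≠ 0) :
    i ∈ insert l H := by
  by_cases hi : i ∈ H <;> simp_all [divertShare]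

variable [Fintype α]

/-- The share of each product that `divertShare` leaves over. -/
def residual (H : Finset α) (y : α → α → ℝ) (b : α → ℝ) (i : α) : ℝ :=
  if i ∈ H then 1 - ∑ l ∈ Hᶜ, y i l else 1 - b i

lemma sum_divertShare (i : α) :
    ∑ l ∈ Hᶜ, divertShare H y b l i = 1 - residual H y b i := by
  by_cases hi : i ∈ H <;> simp [divertShare, residual, hi]

lemma sum_divertShare_mul {l : α} (hl : l ∉ H) (g : α → ℝ) :
    ∑ i, divertShare H y b l i * g i = ∑ h ∈ H, y h l * g h + b l * g l := by
  have hsplit : ∀ i, divertShare H y b l i * g i =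
      (if i ∈ H then y i l * g i else 0) + if i = l then b i * g i else 0 := fun i => by
    by_cases hi : i ∈ H
    · simp [divertShare, hi, ne_of_mem_of_not_mem hi hl]
    · by_cases hil : i = l <;> simp [divertShare, hi, hil, hl]
  simp only [hsplit, sum_add_distrib, sum_ite_mem, univ_inter, sum_ite_eq', mem_univ, if_true]

/-- `y` and `b` are shares of the high and the low products that `divertShare` may divert. -/
structure IsDiversion (H : Finset α) (y : α → α → ℝ) (b : α → ℝ) : Prop where
  nonneg : ∀ h ∈ H, ∀ l, 0 ≤ y h l
  row_le_one : ∀ h ∈ H, ∑ l ∈ Hᶜ, y h l ≤ 1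
  own_nonneg : ∀ l ∈ Hᶜ, 0 ≤ b l
  own_le_one : ∀ l ∈ Hᶜ, b l ≤ 1

lemma IsDiversion.residual_nonneg (hy : IsDiversion H y b) (i : α) : 0 ≤ residual H y b i := by
  rw [residual]
  split_ifs with hi
  exacts [sub_nonneg.mpr (hy.row_le_one i hi),
    sub_nonneg.mpr (hy.own_le_one i (mem_compl.mpr hi))]

lemma IsDiversion.divertShare_nonneg (hy : IsDiversion H y b) (l i : α) :
    0 ≤ divertShare H y b l i := by
  rw [divertShare]
  split_ifs with hi
  exacts [hy.nonneg i hi l, hy.own_nonneg i (mem_compl.mpr hi), le_rfl]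

/-- Two low products keep `insert k Hᶜ` with `k ∈ H` apart from `insert l H` with `l ∉ H`. -/
lemma poolSignal_ne_insert (hH : H.Nonempty) (hL : Hᶜ.Nontrivial) (k l : α) :
    poolSignal H k ≠ insert l H := by
  obtain ⟨h, hh⟩ := hH
  obtain ⟨l', hl', hne⟩ := hL.exists_ne l
  intro heq
  by_cases hk : k ∈ H
  · have hmem : l' ∈ poolSignal H k := by
      rw [poolSignal, if_pos hk]
      exact mem_insert_of_mem hl'
    rw [heq] at hmem
    exact mem_compl.mp hl' (mem_of_mem_insert_of_ne hmem hne)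
  · have hmem : h ∈ poolSignal H k := heq ▸ mem_insert_of_mem hh
    rw [poolSignal, if_neg hk, mem_singleton] at hmem
    exact hk (hmem ▸ hh)

/-- The high products divert shares to the low ones, and what remains is pooled by `poolShare`. -/
def divertDisclosure (hH : H.Nonempty) (hL : Hᶜ.Nontrivial) (hy : IsDiversion H y b)
    (hc : ∀ h ∈ H, 0 ≤ c h) (hc1 : ∑ h ∈ H, c h ≤ 1) : Disclosure α (α ⊕ ↥Hᶜ) where
  signal := Sum.elim (poolSignal H) fun l => insert ↑l H
  share := Sum.elim (poolShare H (residual H y b) c) fun l => divertShare H y b l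
  signal_injective := (poolSignal_injective H).sumElim
    (fun l l' hll => Subtype.ext ((insert_inj (mem_compl.mp l.2)).mp hll))
    fun k l => poolSignal_ne_insert hH hL k l
  signal_nonempty := by
    rintro (k | l)
    exacts [⟨k, self_mem_poolSignal k⟩, insert_nonempty _ _]
  share_nonneg := by
    rintro (k | l) i
    exacts [poolShare_nonneg hy.residual_nonneg hc hc1 k i, hy.divertShare_nonneg l i]
  mem_signal_of_share_ne_zero := by
    rintro (k | l) i hne
    exacts [mem_poolSignal_of_poolShare_ne_zero hne, mem_insert_of_divertShare_ne_zero hne]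
  sum_share i := by
    simp only [Fintype.sum_sum_type, Sum.elim_inl, Sum.elim_inr, sum_poolShare,
      sum_coe_sort Hᶜ fun l => divertShare H y b l i, sum_divertShare]
    ring

end Diversion

namespace Market

variable {α : Type u} [Fintype α] [DecidableEq α] (M : Market α)
  {H : Finset α} {P θ : ℝ} {y z : α → α → ℝ} {b c : α → ℝ}

lemma sum_divertShare_mul_mass :
    ∑ l ∈ Hᶜ, ∑ i, divertShare H y b l i * M.mass i +
      ∑ i ∈ H, residual H y b i * M.mass i = ∑ i ∈ H, M.mass i + ∑ l ∈ Hᶜ, b l * M.mass l := by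
  have hH : ∑ i ∈ H, residual H y b i * M.mass i =
      ∑ i ∈ H, M.mass i - ∑ l ∈ Hᶜ, ∑ h ∈ H, y h l * M.mass h := by
    rw [sum_comm, ← sum_sub_distrib]
    exact sum_congr rfl fun i hi => by rw [residual, if_pos hi, ← sum_mul]; ring
  rw [sum_congr rfl fun l hl => sum_divertShare_mul (mem_compl.mp hl) M.mass, sum_add_distrib, hH]
  ring

lemma attains_divert (hP : 0 ≤ P) (hH : H.Nonempty) (hL : Hᶜ.Nontrivial)
    (hy : IsDiversion H y b) (hc : ∀ h ∈ H, 0 ≤ c h) (hc1 : ∑ h ∈ H, c h ≤ 1)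
    (hbuyHigh : ∀ h ∈ H, c h * (P * ∑ l ∈ Hᶜ, residual H y b l * M.mass l) ≤
      residual H y b h * (M.value h h - P * M.mass h))
    (hbuyLow : ∀ l ∈ Hᶜ, 0 ≤ ∑ h ∈ H, y h l * (M.value h l - P * M.mass h) +
      b l * (M.value l l - P * M.mass l)) :
    M.Attains (P * (∑ h ∈ H, M.mass h + ∑ l ∈ Hᶜ, b l * M.mass l +
      (∑ h ∈ H, c h) * ∑ l ∈ Hᶜ, residual H y b l * M.mass l)) := by
  have hprice : ∀ i, 0 ≤ twoPrice (∅ : Finset α) 0 P i := twoPrice_nonneg le_rfl hP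
  have hsells : ∀ k, Sells (twoPrice ∅ 0 P)
      (M.surplus (twoPrice ∅ 0 P) ((divertDisclosure hH hL hy hc hc1).share k))
      (Sum.elim (poolRevenue H ∅ 0 P) (fun _ => P) k) := by
    rintro (k | l)
    · exact M.sells_poolShare hy.residual_nonneg le_rfl hP (disjoint_empty_left H) (by simp) hc hc1
        hbuyHigh (by simp) k
    · have hsurplus := sum_divertShare_mul (y := y) (b := b) (mem_compl.mp l.2)
        fun i => M.value i l - P * M.mass i
      exact sells_of_forall_cheaper_le (h := ↑l) (by simp [twoPrice])
        ((hbuyLow l l.2).trans hsurplus.ge) fun j hj => by simp [twoPrice] at hj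
  refine (M.attains_of_sells _ hprice hsells).mono (le_of_eq ?_)
  simp only [divertDisclosure, Fintype.sum_sum_type, Sum.elim_inl, Sum.elim_inr,
    sum_poolShare_mul_poolRevenue (disjoint_empty_left H), ← sum_mul,
    sum_coe_sort Hᶜ fun l => ∑ i, divertShare H y b l i * M.mass i]
  linear_combination (-P) * M.sum_divertShare_mul_mass (H := H) (y := y) (b := b)

lemma attains_min_divert (hP : 0 ≤ P) (hH : H.Nonempty) (hL : Hᶜ.Nontrivial)
    (hhigh : ∀ h ∈ H, P * M.mass h ≤ M.value h h) (hy : IsDiversion H y b)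
    (hbuyLow : ∀ l ∈ Hᶜ, 0 ≤ ∑ h ∈ H, y h l * (M.value h l - P * M.mass h) +
      b l * (M.value l l - P * M.mass l)) :
    M.Attains (min P (P * (∑ h ∈ H, M.mass h + ∑ l ∈ Hᶜ, b l * M.mass l) +
      ∑ h ∈ H, (1 - ∑ l ∈ Hᶜ, y h l) * (M.value h h - P * M.mass h))) := by
  have hpool : 0 ≤ ∑ l ∈ Hᶜ, residual H y b l * M.mass l :=
    sum_nonneg fun l _ => mul_nonneg (hy.residual_nonneg l) (M.mass_nonneg l)
  obtain ⟨c, hc, hc1, hbuyHigh, hmin⟩ := exists_proportional_weights H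
    (r := fun h => residual H y b h * (M.value h h - P * M.mass h))
    (fun h hh => mul_nonneg (hy.residual_nonneg h) (sub_nonneg.mpr (hhigh h hh)))
    (mul_nonneg hP hpool)
  refine (M.attains_divert hP hH hL hy hc hc1 hbuyHigh hbuyLow).mono (le_of_eq ?_)
  have hlow : ∑ l ∈ Hᶜ, b l * M.mass l + ∑ l ∈ Hᶜ, residual H y b l * M.mass l =
      ∑ l ∈ Hᶜ, M.mass l := by
    rw [← sum_add_distrib]
    exact sum_congr rfl fun l hl => by rw [residual, if_neg (mem_compl.mp hl)]; ring
  have htotal : P * (∑ h ∈ H, M.mass h + ∑ l ∈ Hᶜ, b l * M.mass l) +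
      P * ∑ l ∈ Hᶜ, residual H y b l * M.mass l = P := by
    rw [← mul_add, add_assoc, hlow, sum_add_sum_compl, M.sum_mass, mul_one]
  have hresidual : ∑ h ∈ H, residual H y b h * (M.value h h - P * M.mass h) =
      ∑ h ∈ H, (1 - ∑ l ∈ Hᶜ, y h l) * (M.value h h - P * M.mass h) :=
    sum_congr rfl fun h hh => by rw [residual, if_pos hh]
  rw [hresidual] at hmin
  calc _ = P * (∑ h ∈ H, M.mass h + ∑ l ∈ Hᶜ, b l * M.mass l) +
        min (P * ∑ l ∈ Hᶜ, residual H y b l * M.mass l)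
          (∑ h ∈ H, (1 - ∑ l ∈ Hᶜ, y h l) * (M.value h h - P * M.mass h)) := by
        rw [← min_add_add_left, htotal]
    _ = _ := by rw [← hmin]; ring

lemma isDiversion_of_isFlow (hθ : 0 ≤ θ) (hhigh : ∀ h ∈ H, P * M.mass h ≤ M.value h h)
    (hz : IsFlow H Hᶜ (fun h => M.value h h - P * M.mass h) (fun l => θ * M.mass l) z) :
    IsDiversion H (fun h l => z h l / (M.value h h - P * M.mass h))
      (fun l => (∑ h ∈ H, z h l) / (θ * M.mass l)) where
  nonneg h hh l := div_nonneg (hz.nonneg h l) (sub_nonneg.mpr (hhigh h hh))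
  row_le_one h hh := by
    rw [← sum_div]
    exact div_le_one_of_le₀ (hz.row_le h hh) (sub_nonneg.mpr (hhigh h hh))
  own_nonneg l _ := div_nonneg (sum_nonneg fun h _ => hz.nonneg h l)
    (mul_nonneg hθ (M.mass_nonneg l))
  own_le_one l hl := div_le_one_of_le₀ (hz.col_le l hl) (mul_nonneg hθ (M.mass_nonneg l))

/-- At price `P` the low product `l` falls short by at most `θ ^ 2` per unit of mass, and the high
product `h` retains at least the fraction `θ` of its surplus when it is sold as `l`. -/
def IsDivertible (P θ : ℝ) (h l : α) : Prop :=
  (P - θ ^ 2) * M.mass l ≤ M.value l l ∧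
    θ * (M.value h h - P * M.mass h) ≤ M.value h l - P * M.mass h

/-- A unit of flow into `l` brings at least `θ` of surplus and comes with `1 / θ` of the mass of
`l`, whose shortfall at price `P` is at most `θ ^ 2` per unit. -/
lemma divert_surplus_nonneg_of_isFlow (hθ : 0 ≤ θ) (hhigh : ∀ h ∈ H, P * M.mass h ≤ M.value h h)
    (hz : IsFlow H Hᶜ (fun h => M.value h h - P * M.mass h) (fun l => θ * M.mass l) z)
    {l : α} (hl : l ∈ Hᶜ) (hedge : ∀ h, z h l ≠ 0 → M.IsDivertible P θ h l) :
    0 ≤ ∑ h ∈ H, z h l / (M.value h h - P * M.mass h) * (M.value h l - P * M.mass h) +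
      (∑ h ∈ H, z h l) / (θ * M.mass l) * (M.value l l - P * M.mass l) := by
  have hdiv := M.isDiversion_of_isFlow hθ hhigh hz
  have hbring : θ * ∑ h ∈ H, z h l ≤
      ∑ h ∈ H, z h l / (M.value h h - P * M.mass h) * (M.value h l - P * M.mass h) := by
    rw [mul_sum]
    refine sum_le_sum fun h hh => ?_
    by_cases h0 : z h l = 0
    · simp [h0]
    · linarith [mul_le_mul_of_nonneg_left (hedge h h0).2 (hdiv.nonneg h hh l),
        congrArg (θ * ·) (hz.div_supply_mul_cancel hh hl)]
  have hneed : -(θ * ∑ h ∈ H, z h l) ≤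
      (∑ h ∈ H, z h l) / (θ * M.mass l) * (M.value l l - P * M.mass l) := by
    by_cases h0 : ∑ h ∈ H, z h l = 0
    · simp [h0]
    · obtain ⟨h, -, hne⟩ := exists_ne_zero_of_sum_ne_zero h0
      linarith [mul_le_mul_of_nonneg_left (hedge h hne).1 (hdiv.own_nonneg l hl),
        congrArg (θ * ·) (hz.sum_div_demand_mul_cancel hl)]
  linarith

lemma attains_of_isFlow (hP : 0 ≤ P) (hθ : 0 < θ) (hH : H.Nonempty) (hL : Hᶜ.Nontrivial)
    (hhigh : ∀ h ∈ H, P * M.mass h ≤ M.value h h)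
    (hz : IsFlow H Hᶜ (fun h => M.value h h - P * M.mass h) (fun l => θ * M.mass l) z)
    (hedge : ∀ h l, z h l ≠ 0 → M.IsDivertible P θ h l) :
    M.Attains (min P (∑ h ∈ H, M.value h h + (P / θ - 1) * ∑ h ∈ H, ∑ l ∈ Hᶜ, z h l)) := by
  refine (M.attains_min_divert hP hH hL hhigh (M.isDiversion_of_isFlow hθ.le hhigh hz)
    fun l hl => M.divert_surplus_nonneg_of_isFlow hθ.le hhigh hz hl (hedge · l)).mono (le_of_eq ?_)
  have hrows : ∑ h ∈ H, (1 - ∑ l ∈ Hᶜ, z h l / (M.value h h - P * M.mass h)) *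
      (M.value h h - P * M.mass h) =
      ∑ h ∈ H, M.value h h - P * ∑ h ∈ H, M.mass h - ∑ h ∈ H, ∑ l ∈ Hᶜ, z h l := by
    rw [mul_sum, ← sum_sub_distrib, ← sum_sub_distrib]
    exact sum_congr rfl fun h hh => by
      rw [sub_mul, sum_mul, sum_congr rfl fun l hl => hz.div_supply_mul_cancel hh hl, one_mul]
  have hcols : ∑ l ∈ Hᶜ, (∑ h ∈ H, z h l) / (θ * M.mass l) * M.mass l =
      (∑ h ∈ H, ∑ l ∈ Hᶜ, z h l) / θ := by
    rw [sum_comm, sum_div]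
    exact sum_congr rfl fun l hl => by
      rw [eq_div_iff hθ.ne', mul_assoc, mul_comm (M.mass l), hz.sum_div_demand_mul_cancel hl]
  rw [hrows, hcols]
  ring_nf

end Market

namespace Market

variable {α : Type u} [Fintype α] (M : Market α)

/-- The products whose mean value, conditional on being the best product, is at least `c`. -/
def tier (c : ℝ) : Finset α := {i | c * M.mass i ≤ M.value i i}

variable {M} {b c P θ : ℝ}

lemma mem_tier {i : α} : i ∈ M.tier c ↔ c * M.mass i ≤ M.value i i := by simp [tier]

lemma tier_anti (hbc : b ≤ c) : M.tier c ⊆ M.tier b := fun i hi => mem_tier.mpr <|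
  (mul_le_mul_of_nonneg_right hbc (M.mass_nonneg i)).trans (mem_tier.mp hi)

variable (M)

lemma sum_value_le_sum_tier_add (hb : 0 ≤ b) (s : Finset α) :
    ∑ i ∈ s, M.value i i ≤ ∑ i ∈ M.tier b, M.value i i + b * ∑ i ∈ s, M.mass i := by
  classical
  have hhigh : ∑ i ∈ s with i ∈ M.tier b, M.value i i ≤ ∑ i ∈ M.tier b, M.value i i :=
    sum_le_sum_of_subset_of_nonneg (fun i hi => (mem_filter.mp hi).2)
      fun i _ _ => M.value_nonneg i i
  have hlow : ∑ i ∈ s with i ∉ M.tier b, M.value i i ≤ b * ∑ i ∈ s, M.mass i := by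
    rw [mul_sum]
    exact (sum_le_sum fun i hi => (not_le.mp (mem_tier.not.mp (mem_filter.mp hi).2)).le).trans
      (sum_le_sum_of_subset_of_nonneg (filter_subset _ s)
        fun i _ _ => mul_nonneg hb (M.mass_nonneg i))
  rw [← sum_filter_add_sum_filter_not s (· ∈ M.tier b)]
  exact add_le_add hhigh hlow

/-- Total welfare is normalized to `1`, and the products worth a uniform price of `0.5017` carry too
little of it for `attains_min_uniform_price`. -/
structure IsTopHeavy : Prop where
  sum_value : ∑ i, M.value i i = 1
  sum_tier_lt : ∑ i ∈ M.tier 0.5017, M.value i i < 0.5017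

variable {M} in
lemma IsTopHeavy.sum_value_lt_of_subset (hM : M.IsTopHeavy) {s : Finset α} (hs : s ⊆ M.tier 2.1) :
    ∑ i ∈ s, M.value i i < 0.5017 :=
  (sum_le_sum_of_subset_of_nonneg (hs.trans (tier_anti (by norm_num)))
    fun i _ _ => M.value_nonneg i i).trans_lt hM.sum_tier_lt

lemma sum_mass_sub_le_sum_mass_sdiff [DecidableEq α] (s t : Finset α) :
    ∑ i ∈ s, M.mass i - ∑ i ∈ t, M.mass i ≤ ∑ i ∈ s \ t, M.mass i := by
  have hinter : ∑ i ∈ s ∩ t, M.mass i ≤ ∑ i ∈ t, M.mass i :=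
    sum_le_sum_of_subset_of_nonneg inter_subset_right fun i _ _ => M.mass_nonneg i
  linarith [sum_inter_add_sum_sdiff s t M.mass]

lemma sum_value_compl_tier_le [DecidableEq α] (hbc : b ≤ c) :
    ∑ i ∈ (M.tier c)ᶜ, M.value i i ≤
      c * ∑ i ∈ (M.tier c)ᶜ, M.mass i - (c - b) * ∑ i ∈ (M.tier b)ᶜ, M.mass i := by
  have hindicator : ∑ i ∈ (M.tier b)ᶜ, M.mass i =
      ∑ i ∈ (M.tier c)ᶜ, if i ∈ (M.tier b)ᶜ then M.mass i else 0 := by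
    rw [sum_ite_mem, inter_eq_right.mpr (compl_subset_compl.mpr (tier_anti hbc))]
  rw [hindicator, mul_sum, mul_sum, ← sum_sub_distrib]
  refine sum_le_sum fun i hi => ?_
  rw [mem_compl, mem_tier, not_le] at hi
  split_ifs with hib
  · rw [mem_compl, mem_tier, not_le] at hib
    linarith
  · linarith

variable {M}

lemma IsTopHeavy.mass_tier_add_le [DecidableEq α] (hM : M.IsTopHeavy) (hb : b ≤ 0.5017) :
    0.5017 * ∑ i ∈ M.tier 0.5017, M.mass i + (0.5017 - b) * ∑ i ∈ (M.tier b)ᶜ, M.mass i ≤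
      ∑ i ∈ M.tier 0.5017, M.value i i - 0.4983 := by
  have hlow := M.sum_value_compl_tier_le hb
  have hvalue := sum_add_sum_compl (M.tier 0.5017) fun i => M.value i i
  have hmass := sum_add_sum_compl (M.tier 0.5017) M.mass
  rw [hM.sum_value] at hvalue
  rw [M.sum_mass] at hmass
  linarith

lemma IsTopHeavy.mass_tier_le (hM : M.IsTopHeavy) :
    ∑ i ∈ M.tier 0.5017, M.mass i ≤ 0.0068 := by
  classical
  linarith [hM.mass_tier_add_le le_rfl, hM.sum_tier_lt]

lemma IsTopHeavy.le_mass_tier (hM : M.IsTopHeavy) : 0.918 ≤ ∑ i ∈ M.tier 0.46, M.mass i := by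
  classical
  have hmass : 0 ≤ ∑ i ∈ M.tier 0.5017, M.mass i := sum_nonneg fun i _ => M.mass_nonneg i
  have hcompl := sum_add_sum_compl (M.tier 0.46) M.mass
  rw [M.sum_mass] at hcompl
  linarith [hM.mass_tier_add_le (b := 0.46) (by norm_num), hM.sum_tier_lt]

lemma IsTopHeavy.le_sum_value_tier (hM : M.IsTopHeavy) :
    0.487 ≤ ∑ i ∈ M.tier 2.1, M.value i i := by
  classical
  have hhigh := M.sum_value_le_sum_tier_add (b := 2.1) (by norm_num) (M.tier 0.5017)
  linarith [hM.mass_tier_add_le le_rfl, hM.mass_tier_le]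

lemma IsTopHeavy.mass_le_of_subset (hM : M.IsTopHeavy) {s : Finset α} (hs : s ⊆ M.tier 2.1) :
    ∑ i ∈ s, M.mass i ≤ 0.0068 :=
  (sum_le_sum_of_subset_of_nonneg (hs.trans (tier_anti (by norm_num)))
    fun i _ _ => M.mass_nonneg i).trans hM.mass_tier_le

variable {z : α → α → ℝ}

lemma sum_value_ge_of_compl_eq_singleton [DecidableEq α] {H : Finset α} {j : α} (hj : Hᶜ = {j})
    (hP : 0 ≤ P) (hθ : 0 ≤ θ)
    (hz : IsFlow H Hᶜ (fun h => M.value h h - P * M.mass h) (fun l => θ * M.mass l) z)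
    (hedge : ∀ h l, z h l ≠ 0 → M.IsDivertible P θ h l) :
    ∑ l ∈ Hᶜ, M.value l l + θ * ∑ h ∈ H, ∑ l ∈ Hᶜ, z h l ≤ ∑ i, M.value i j := by
  have hdiverted : θ * ∑ h ∈ H, z h j ≤ ∑ h ∈ H, M.value h j := by
    rw [mul_sum]
    refine sum_le_sum fun h hh => ?_
    by_cases h0 : z h j = 0
    · simpa [h0] using M.value_nonneg h j
    · have hrow := hz.row_le h hh
      rw [hj, sum_singleton] at hrow
      linarith [mul_le_mul_of_nonneg_left hrow hθ, (hedge h j h0).2,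
        mul_nonneg hP (M.mass_nonneg h)]
  rw [← sum_add_sum_compl H, hj]
  simp only [sum_singleton]
  linarith

/-- If there is only one low product, selling it to everyone does as well as diverting. -/
lemma IsTopHeavy.attains_of_large_flow [DecidableEq α] (hM : M.IsTopHeavy)
    (hz : IsFlow (M.tier 2.1) (M.tier 2.1)ᶜ (fun h => M.value h h - 0.55 * M.mass h)
      (fun l => 0.3 * M.mass l) z)
    (hedge : ∀ h l, z h l ≠ 0 → M.IsDivertible 0.55 0.3 h l)
    (hlarge : 0.02 ≤ ∑ h ∈ M.tier 2.1, ∑ l ∈ (M.tier 2.1)ᶜ, z h l) : M.Attains 0.5017 := by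
  have hhigh : ∀ h ∈ M.tier 2.1, 0.55 * M.mass h ≤ M.value h h := fun h hh =>
    mem_tier.mp (tier_anti (by norm_num) hh)
  have hvalue := sum_add_sum_compl (M.tier 2.1) fun i => M.value i i
  rw [hM.sum_value] at hvalue
  have hlt := hM.sum_value_lt_of_subset subset_rfl
  have hnonempty : (M.tier 2.1)ᶜ.Nonempty :=
    nonempty_of_sum_ne_zero (f := fun i => M.value i i) (ne_of_gt (by linarith))
  rcases hnonempty.exists_eq_singleton_or_nontrivial with ⟨j, hj⟩ | hnontrivial
  · have hsell := sum_value_ge_of_compl_eq_singleton hj (by norm_num) (by norm_num) hz hedge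
    exact (M.attains_sum_value j).mono (by linarith)
  · have hne : (M.tier 2.1).Nonempty := nonempty_of_sum_ne_zero (f := fun i => M.value i i)
      (ne_of_gt (by linarith [hM.le_sum_value_tier]))
    refine (M.attains_of_isFlow (by norm_num) (by norm_num) hne hnontrivial hhigh hz hedge).mono
      (le_min (by norm_num) ?_)
    norm_num at hlarge ⊢
    linarith [hM.le_sum_value_tier]

lemma exists_attains_two_price [DecidableEq α] {H B : Finset α} {t : ℝ} {n : α → ℝ}
    (ht : 0 ≤ t) (htP : t ≤ P) (hBH : Disjoint B H) (hB : B ⊆ M.tier t) (hn : ∀ h ∈ H, 0 ≤ n h)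
    (hbuy : ∀ h ∈ H, n h ≤ M.value h h - P * M.mass h)
    (hstay : ∀ h ∈ H, ∀ j ∈ B, n h + (M.value h j - t * M.mass h) ≤ M.value h h - P * M.mass h)
    (hlow : t * ∑ i ∈ Hᶜ, M.mass i ≤ ∑ i ∈ Hᶜ, M.value i i) :
    ∃ Λ, Λ ≤ 1 ∧ Λ * ∑ i ∈ Hᶜ, (M.value i i + (P - t) * M.mass i) =
        min (∑ i ∈ Hᶜ, (M.value i i + (P - t) * M.mass i)) (∑ h ∈ H, n h) ∧
      M.Attains (P * (∑ i ∈ H, M.mass i + Λ * ∑ i ∈ Hᶜ, M.mass i) +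
        t * ((1 - Λ) * ∑ i ∈ B, M.mass i)) := by
  set d := ∑ i ∈ Hᶜ, (M.value i i + (P - t) * M.mass i) with hd
  have hload : P * ∑ i ∈ Hᶜ, M.mass i ≤ d := by
    rw [hd, sum_add_distrib, ← mul_sum]
    linarith
  have hmass : 0 ≤ ∑ i ∈ Hᶜ, M.mass i := sum_nonneg fun i _ => M.mass_nonneg i
  obtain ⟨c, hc, hc1, hcd, hmin⟩ := exists_proportional_weights H hn
    ((mul_nonneg (ht.trans htP) hmass).trans hload)
  refine ⟨∑ h ∈ H, c h, hc1, hmin, M.attains_two_price ht htP hBH (fun i hi => mem_tier.mp (hB hi))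
    hc hc1 (fun h hh => ?_) fun h hh j hj => ?_⟩
  · exact (mul_le_mul_of_nonneg_left hload (hc h hh)).trans ((hcd h hh).trans (hbuy h hh))
  · linarith [hcd h hh, hstay h hh j hj]

lemma IsTopHeavy.attains_of_forall_not_isDivertible (hM : M.IsTopHeavy) {H B : Finset α}
    (hH : H ⊆ M.tier 2.1) (hB : B ⊆ M.tier 0.46) (hBH : Disjoint B H)
    (hindep : ∀ h ∈ H, ∀ j ∈ B, ¬ M.IsDivertible 0.55 0.3 h j)
    (hsurplus : 0.463 ≤ ∑ h ∈ H, (M.value h h - 0.55 * M.mass h))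
    (hmassB : 0.84 ≤ ∑ j ∈ B, M.mass j) : M.Attains 0.5017 := by
  classical
  have hvalue := sum_add_sum_compl H fun i => M.value i i
  have hmass := sum_add_sum_compl H M.mass
  rw [hM.sum_value] at hvalue
  rw [M.sum_mass] at hmass
  have hmassH : 0 ≤ ∑ h ∈ H, M.mass h := sum_nonneg fun h _ => M.mass_nonneg h
  have hmassH' := hM.mass_le_of_subset hH
  have hvalueH := hM.sum_value_lt_of_subset hH
  have hhigh : ∀ h ∈ H, 2.1 * M.mass h ≤ M.value h h := fun h hh => mem_tier.mp (hH hh)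
  have hstay : ∀ h ∈ H, ∀ j ∈ B, M.value h j - 0.55 * M.mass h <
      0.3 * (M.value h h - 0.55 * M.mass h) := fun h hh j hj => not_le.mp fun hle =>
    hindep h hh j hj ⟨by norm_num; linarith [mem_tier.mp (hB hj)], hle⟩
  obtain ⟨Λ, hΛ1, hΛ, hattains⟩ := exists_attains_two_price (M := M) (t := 0.46) (P := 1.5)
    (n := fun h => 0.7 * (M.value h h - 0.55 * M.mass h) - 1.04 * M.mass h)
    (by norm_num) (by norm_num) hBH hB
    (fun h hh => by linarith [hhigh h hh, M.mass_nonneg h])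
    (fun h hh => by linarith [hhigh h hh, M.mass_nonneg h])
    (fun h hh j hj => by linarith [hstay h hh j hj]) (by linarith)
  rw [sum_add_distrib, ← mul_sum, sum_sub_distrib, ← mul_sum, ← mul_sum] at hΛ
  have hΛ0 : 0.19 ≤ Λ := by
    rw [sum_sub_distrib, ← mul_sum] at hΛ hsurplus
    refine le_of_mul_le_mul_right (hΛ.ge.trans' (le_min ?_ ?_)) ?_ <;> linarith
  rw [← eq_sub_iff_add_eq'] at hmass
  refine hattains.mono ?_
  rw [hmass]
  linarith [mul_le_mul_of_nonneg_left hmassB (sub_nonneg.mpr hΛ1),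
    mul_nonneg (sub_nonneg.mpr hΛ1) hmassH]

lemma IsTopHeavy.attains_of_small_flow [DecidableEq α] (hM : M.IsTopHeavy)
    (hz : IsFlow (M.tier 2.1) (M.tier 2.1)ᶜ (fun h => M.value h h - 0.55 * M.mass h)
      (fun l => 0.3 * M.mass l) z)
    (hsat : ∀ h ∈ M.tier 2.1, ∀ l ∈ (M.tier 2.1)ᶜ, M.IsDivertible 0.55 0.3 h l →
      ∑ l' ∈ (M.tier 2.1)ᶜ, z h l' = M.value h h - 0.55 * M.mass h ∨
        ∑ h' ∈ M.tier 2.1, z h' l = 0.3 * M.mass l)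
    (hsmall : ∑ h ∈ M.tier 2.1, ∑ l ∈ (M.tier 2.1)ᶜ, z h l < 0.02) : M.Attains 0.5017 := by
  set H := M.tier 2.1
  set rowSat := {h ∈ H | ∑ l ∈ Hᶜ, z h l = M.value h h - 0.55 * M.mass h}
  set colSat := {l ∈ Hᶜ | ∑ h ∈ H, z h l = 0.3 * M.mass l}
  have hrow : ∑ h ∈ rowSat, (M.value h h - 0.55 * M.mass h) ≤ 0.02 :=
    hz.sum_saturated_rows_le.trans hsmall.le
  have hcol : 0.3 * ∑ l ∈ colSat, M.mass l ≤ 0.02 := by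
    rw [mul_sum]
    exact hz.sum_saturated_cols_le.trans hsmall.le
  have hvalueH : 0.487 ≤ ∑ h ∈ H, M.value h h := hM.le_sum_value_tier
  have hmassH : ∑ h ∈ H, M.mass h ≤ 0.0068 := hM.mass_le_of_subset subset_rfl
  refine hM.attains_of_forall_not_isDivertible (H := H \ rowSat)
    (B := (M.tier 0.46 \ H) \ colSat) sdiff_subset (sdiff_subset.trans sdiff_subset)
    (disjoint_of_subset_right sdiff_subset (disjoint_of_subset_left sdiff_subset sdiff_disjoint))
    (fun h hh j hj hdiv => ?_) ?_ ?_
  · obtain ⟨hhH, hhSat⟩ := mem_sdiff.mp hh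
    obtain ⟨hjB, hjSat⟩ := mem_sdiff.mp hj
    have hjH : j ∈ Hᶜ := mem_compl.mpr (mem_sdiff.mp hjB).2
    rcases hsat h hhH j hjH hdiv with hrowEq | hcolEq
    · exact hhSat (mem_filter.mpr ⟨hhH, hrowEq⟩)
    · exact hjSat (mem_filter.mpr ⟨hjH, hcolEq⟩)
  · have hrowSat : rowSat ⊆ H := filter_subset _ _
    rw [sum_sdiff_eq_sub hrowSat, sum_sub_distrib (s := H), ← mul_sum]
    linarith
  · linarith [M.sum_mass_sub_le_sum_mass_sdiff (M.tier 0.46 \ H) colSat,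
      M.sum_mass_sub_le_sum_mass_sdiff (M.tier 0.46) H, hM.le_mass_tier]

lemma attains_of_sum_value_eq_one (hW : ∑ i, M.value i i = 1) : M.Attains 0.5017 := by
  classical
  rcases le_or_gt 0.5017 (∑ i ∈ M.tier 0.5017, M.value i i) with hle | hlt
  · exact (M.attains_min_uniform_price (by norm_num) fun h hh => mem_tier.mp hh).mono
      (le_min le_rfl hle)
  have hM : M.IsTopHeavy := ⟨hW, hlt⟩
  obtain ⟨z, hz, hedge, hsat⟩ := exists_isFlow_forall_edge_saturated (M.IsDivertible 0.55 0.3)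
    (H := M.tier 2.1) (L := (M.tier 2.1)ᶜ) (A := fun h => M.value h h - 0.55 * M.mass h)
    (B := fun l => 0.3 * M.mass l)
    (fun h hh => sub_nonneg.mpr (mem_tier.mp (tier_anti (by norm_num) hh)))
    (fun l _ => mul_nonneg (by norm_num) (M.mass_nonneg l))
  rcases le_or_gt 0.02 (∑ h ∈ M.tier 2.1, ∑ l ∈ (M.tier 2.1)ᶜ, z h l) with hlarge | hsmall
  · exact hM.attains_of_large_flow hz hedge hlarge
  · exact hM.attains_of_small_flow hz hsat hsmall

lemma attains_mul_sum_value [Nonempty α] (M : Market α) :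
    M.Attains (0.5017 * ∑ i, M.value i i) := by
  have hW : 0 ≤ ∑ i, M.value i i := sum_nonneg fun i _ => M.value_nonneg i i
  rcases hW.eq_or_lt with hW | hW
  · refine (M.attains_sum_value (Classical.arbitrary α)).mono ?_
    rw [← hW, mul_zero]
    exact sum_nonneg fun i _ => M.value_nonneg i _
  · refine Attains.of_rescale hW (attains_of_sum_value_eq_one ?_)
    simp only [rescale, ← sum_div, div_self hW.ne']

end Market

section Welfare

variable {hm : 0 < m} {V : Finset (Fin m → ℝ)} {f : (Fin m → ℝ) → ℝ}

lemma le_vmax (hm : 0 < m) (v : Fin m → ℝ) (i : Fin m) : v i ≤ vmax hm v :=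
  le_sup' v (mem_univ i)

lemma apply_istar (hm : 0 < m) (v : Fin m → ℝ) : v (istar hm v) = vmax hm v :=
  (le_vmax hm v _).antisymm <| sup'_le _ _ fun j _ =>
    (mem_filter.mp (min'_mem {i | ∀ j, v j ≤ v i} _)).2 j

lemma sum_mul_alloc_le_vmax {x : Fin m → ℝ} (hx : ∀ i, 0 ≤ x i) (hx1 : ∑ i, x i ≤ 1)
    {v : Fin m → ℝ} (hv : ∀ i, 0 ≤ v i) : ∑ i, v i * x i ≤ vmax hm v := by
  have hmax : 0 ≤ vmax hm v := apply_istar hm v ▸ hv _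
  calc ∑ i, v i * x i ≤ ∑ i, vmax hm v * x i :=
        sum_le_sum fun i _ => mul_le_mul_of_nonneg_right (le_vmax hm v i) (hx i)
    _ = vmax hm v * ∑ i, x i := (mul_sum _ _ _).symm
    _ ≤ vmax hm v := mul_le_of_le_one_right hmax hx1

lemma sigR_mul_price_le {σ : (Fin m → ℝ) → ι → ℝ} {s : ι} {x : Fin m → ℝ} {q : ℝ}
    (hf : ∀ v ∈ V, 0 ≤ f v) (hnn : ∀ v ∈ V, ∀ i, 0 ≤ v i) (hσ : ∀ v ∈ V, 0 ≤ σ v s)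
    (hx : ∀ i, 0 ≤ x i) (hx1 : ∑ i, x i ≤ 1)
    (hIR : 0 < sigR V f σ s → q ≤ ∑ i, post V f σ s i * x i) :
    sigR V f σ s * q ≤ ∑ v ∈ V, f v * σ v s * vmax hm v := by
  have hweight : ∀ v ∈ V, 0 ≤ f v * σ v s := fun v hv => mul_nonneg (hf v hv) (hσ v hv)
  have hprob : 0 ≤ sigR V f σ s := sum_nonneg hweight
  rcases hprob.eq_or_lt with h0 | hpos
  · rw [← h0, zero_mul]
    exact sum_nonneg fun v hv => mul_nonneg (hweight v hv) (apply_istar hm v ▸ hnn v hv _)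
  · calc sigR V f σ s * q ≤ sigR V f σ s * ∑ i, post V f σ s i * x i :=
          mul_le_mul_of_nonneg_left (hIR hpos) hpos.le
      _ = ∑ i, (∑ v ∈ V, f v * σ v s * v i) * x i := by
          rw [mul_sum]
          exact sum_congr rfl fun i _ => by rw [post, ← mul_assoc, mul_div_cancel₀ _ hpos.ne']
      _ = ∑ v ∈ V, f v * σ v s * ∑ i, v i * x i := by
          simp only [sum_mul, mul_sum, mul_assoc]
          exact sum_comm
      _ ≤ ∑ v ∈ V, f v * σ v s * vmax hm v := sum_le_sum fun v hv =>
          mul_le_mul_of_nonneg_left (sum_mul_alloc_le_vmax hx hx1 (hnn v hv)) (hweight v hv)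

lemma rev_le_sum_vmax {S : Finset ι} {σ : (Fin m → ℝ) → ι → ℝ} {x : ι → Fin m → ℝ} {q : ι → ℝ}
    (hf : ∀ v ∈ V, 0 ≤ f v) (hnn : ∀ v ∈ V, ∀ i, 0 ≤ v i) (hσ : IsInfo V S σ) (hx : IsAlloc S x)
    (hIR : IR V f S σ x q) : Rev V f S σ q ≤ ∑ v ∈ V, f v * vmax hm v :=
  calc Rev V f S σ q ≤ ∑ s ∈ S, ∑ v ∈ V, f v * σ v s * vmax hm v := sum_le_sum fun s hs =>
        sigR_mul_price_le hf hnn (fun v hv => (hσ v hv).1 s) (hx s hs).1 (hx s hs).2.2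
          fun hpos => sub_nonneg.mp (hIR s hs hpos)
    _ = ∑ v ∈ V, f v * vmax hm v := by
        rw [sum_comm]
        refine sum_congr rfl fun v hv => ?_
        rw [← sum_mul, ← mul_sum, (hσ v hv).2.2, mul_one]

lemma sum_mul_apply_istar (g : Fin m → ℝ) (φ : (Fin m → ℝ) → ℝ) :
    ∑ v ∈ V, φ v * g (istar hm v) = ∑ i, g i * ∑ v ∈ V with istar hm v = i, φ v := by
  rw [← sum_fiberwise V (istar hm)]
  refine sum_congr rfl fun i _ => ?_
  rw [mul_sum]
  exact sum_congr rfl fun v hv => by rw [(mem_filter.mp hv).2, mul_comm]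

/-- The market whose horizontal disclosures are those of the value distribution `f`. -/
def horizontalMarket (hm : 0 < m) (hf : ∀ v ∈ V, 0 ≤ f v) (hsum : ∑ v ∈ V, f v = 1)
    (hnn : ∀ v ∈ V, ∀ i, 0 ≤ v i) : Market (Fin m) where
  mass := probTop V f (istar hm)
  value i j := ∑ v ∈ V with istar hm v = i, f v * v j
  mass_nonneg i := sum_nonneg fun v hv => hf v (mem_filter.mp hv).1
  sum_mass := (sum_fiberwise V (istar hm) f).trans hsum
  value_nonneg i j := sum_nonneg fun v hv =>
    mul_nonneg (hf v (mem_filter.mp hv).1) (hnn v (mem_filter.mp hv).1 j)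
  value_le_value_self i j := sum_le_sum fun v hv => by
    obtain ⟨hvV, rfl⟩ := mem_filter.mp hv
    exact mul_le_mul_of_nonneg_left ((le_vmax hm v j).trans_eq (apply_istar hm v).symm) (hf v hvV)

variable {hf : ∀ v ∈ V, 0 ≤ f v} {hsum : ∑ v ∈ V, f v = 1} {hnn : ∀ v ∈ V, ∀ i, 0 ≤ v i}

lemma sum_value_horizontalMarket :
    ∑ i, (horizontalMarket hm hf hsum hnn).value i i = ∑ v ∈ V, f v * vmax hm v := by
  rw [← sum_fiberwise V (istar hm)]
  refine sum_congr rfl fun i _ => sum_congr rfl fun v hv => ?_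
  rw [← apply_istar hm v, (mem_filter.mp hv).2]

variable {K : Type} [Fintype K] (D : Disclosure (Fin m) K)

lemma sigR_kernel_signal (k : K) :
    sigR V f (fun v => D.kernel (istar hm v)) (D.signal k) =
      ∑ i, D.share k i * (horizontalMarket hm hf hsum hnn).mass i := by
  simp only [sigR, D.kernel_signal]
  exact sum_mul_apply_istar (D.share k) f

lemma post_kernel_signal_sub (p : Fin m → ℝ) {k : K}
    (hpos : 0 < sigR V f (fun v => D.kernel (istar hm v)) (D.signal k)) (j : Fin m) :
    post V f (fun v => D.kernel (istar hm v)) (D.signal k) j - p j =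
      (horizontalMarket hm hf hsum hnn).surplus p (D.share k) j *
        (sigR V f (fun v => D.kernel (istar hm v)) (D.signal k))⁻¹ := by
  have hnum : ∑ v ∈ V, f v * D.kernel (istar hm v) (D.signal k) * v j =
      ∑ i, D.share k i * (horizontalMarket hm hf hsum hnn).value i j := by
    simp only [D.kernel_signal, mul_right_comm]
    exact sum_mul_apply_istar (D.share k) fun v => f v * v j
  rw [← div_eq_mul_inv, eq_div_iff hpos.ne', sub_mul, post, div_mul_cancel₀ _ hpos.ne', hnum,
    sigR_kernel_signal (hf := hf) (hsum := hsum) (hnn := hnn), Market.surplus, mul_sum,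
    ← sum_sub_distrib]
  exact sum_congr rfl fun i _ => by ring

lemma isOptimalPurchase_post_sub {p : Fin m → ℝ} {k : K} {o : Option (Fin m)}
    (ho : IsOptimalPurchase ((horizontalMarket hm hf hsum hnn).surplus p (D.share k)) o)
    (hpos : 0 < sigR V f (fun v => D.kernel (istar hm v)) (D.signal k)) :
    IsOptimalPurchase
      (fun j => post V f (fun v => D.kernel (istar hm v)) (D.signal k) j - p j) o := by
  simpa only [post_kernel_signal_sub (hf := hf) (hsum := hsum) (hnn := hnn) D p hpos]
    using ho.mul_right (inv_nonneg.mpr hpos.le)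

end Welfare

/-- a (two-price) deterministic pricing mechanism paired with a coarse
horizontal disclosure achieves at least 50.17% of the optimal welfare, and hence at
least 50.17% of the revenue of any IC-IR mechanism. -/
theorem pricing_beats_half (m : ℕ) (hm : 0 < m)
    (V : Finset (Fin m → ℝ)) (f : (Fin m → ℝ) → ℝ)
    (hV : V.Nonempty)
    (hfpos : ∀ v ∈ V, 0 < f v)
    (hfzero : ∀ v, v ∉ V → f v = 0)
    (hsum : ∑ v ∈ V, f v = 1)
    (hnn : ∀ v ∈ V, ∀ i, 0 ≤ v i) :
    ∃ (S : Finset (Finset (Fin m))) (τ : Fin m → Finset (Fin m) → ℝ)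
      (p : Fin m → ℝ) (a : Finset (Fin m) → Option (Fin m)),
      -- the signals are nonempty subsets of the set of products
      (∀ s ∈ S, s.Nonempty) ∧
      -- each τ i is a probability distribution over S
      (∀ i : Fin m, (∀ s, 0 ≤ τ i s) ∧ (∀ s, s ∉ S → τ i s = 0) ∧ (∑ s ∈ S, τ i s = 1)) ∧
      -- i belongs to every signal in the support of τ i
      (∀ i : Fin m, ∀ s, 0 < τ i s → i ∈ s) ∧
      -- the prices are nonnegative
      (∀ i, 0 ≤ p i) ∧
      -- under the coarse horizontal disclosure σ(v) = τ(i*(v)), the selection rule a is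
      -- an optimal purchase decision of the buyer at every positive-probability signal
      (∀ s ∈ S, 0 < sigR V f (fun v => τ (istar hm v)) s →
        (∀ i : Fin m, a s = some i →
          0 ≤ post V f (fun v => τ (istar hm v)) s i - p i ∧
          (∀ i' : Fin m, post V f (fun v => τ (istar hm v)) s i' - p i' ≤
            post V f (fun v => τ (istar hm v)) s i - p i)) ∧
        (a s = none → ∀ i' : Fin m, post V f (fun v => τ (istar hm v)) s i' - p i' ≤ 0)) ∧
      -- the revenue is at least 50.17% of the optimal welfare E[max_i v_i]
      (0.5017 : ℝ) * (∑ v ∈ V, f v * vmax hm v) ≤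
        (∑ s ∈ S, sigR V f (fun v => τ (istar hm v)) s * (a s).elim 0 p) ∧
      -- and hence at least 50.17% of the revenue of any IC-IR mechanism
      (∀ (κ : Type) (S' : Finset κ) (σ' : (Fin m → ℝ) → κ → ℝ)
          (x : κ → Fin m → ℝ) (q : κ → ℝ),
          IsInfo V S' σ' → IsAlloc S' x → IC V f S' σ' x q → IR V f S' σ' x q →
          (0.5017 : ℝ) * Rev V f S' σ' q ≤
            ∑ s ∈ S, sigR V f (fun v => τ (istar hm v)) s * (a s).elim 0 p) := by
  have hf : ∀ v ∈ V, 0 ≤ f v := fun v hv => (hfpos v hv).le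
  have : Nonempty (Fin m) := Fin.pos_iff_nonempty.mp hm
  obtain ⟨K, _, D, p, a, hp, ha, hrev⟩ := (horizontalMarket hm hf hsum hnn).attains_mul_sum_value
  have ha_signal (k : K) : Function.extend D.signal a (fun _ => none) (D.signal k) = a k :=
    D.signal_injective.extend_apply _ _ _
  have hwelfare : (0.5017 : ℝ) * (∑ v ∈ V, f v * vmax hm v) ≤
      ∑ s ∈ D.signals, sigR V f (fun v => D.kernel (istar hm v)) s *
        (Function.extend D.signal a (fun _ => none) s).elim 0 p := by
    simpa only [D.sum_signals, sum_value_horizontalMarket, ha_signal,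
      sigR_kernel_signal (hf := hf) (hsum := hsum) (hnn := hnn)] using hrev
  refine ⟨D.signals, D.kernel, p, Function.extend D.signal a fun _ => none,
    fun s => D.nonempty_of_mem_signals,
    fun i => ⟨D.kernel_nonneg i, fun s hs => D.kernel_eq_zero_of_notMem_signals hs i,
      D.sum_kernel i⟩,
    fun i s => D.mem_of_kernel_pos, hp, fun s hs hpos => ?_, hwelfare,
    fun κ S' σ' x q hσ hx _ hIR => ?_⟩
  · obtain ⟨k, -, rfl⟩ := mem_image.mp hs
    rw [ha_signal]
    exact isOptimalPurchase_post_sub D (ha k) hpos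
  · exact (mul_le_mul_of_nonneg_left (rev_le_sum_vmax hf hnn hσ hx hIR) (by norm_num)).trans
      hwelfare

end Screening
end
end

section
/- Let f be a value distribution on ℝ_{≥0}^m with finite support on which every v has a unique maximizing coordinate i*(v). Suppose that for all i ≠ i' with P(i*(v)=i) > 0 and P(i*(v)=i') > 0 one has E[v_i | i*(v)=i] ≥ E[v_i | i*(v)=i']. Define prices p_i := E[v_i | i*(v)=i] for every i with P(i*(v)=i) > 0. Then: (i) for every i with P(i*(v)=i) > 0 and every i' with P(i*(v)=i') > 0, E[v_{i'} | i*(v)=i] − p_{i'} ≤ 0 = E[v_i | i*(v)=i] − p_i, so under horizontal disclosure the buyer receiving signal i optimally purchases product i at price p_i and obtains zero utility; and (ii) the resulting revenue satisfies Σ_{i : P(i*(v)=i) > 0} P(i*(v)=i)·p_i = E[max_j v_j], i.e., this pricing mechanism with horizontal disclosure extracts the full surplus. -/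
open Finset

noncomputable section

namespace Screening

variable {m : ℕ} {ι : Type}

section

variable {V : Finset (Fin m → ℝ)} {f : (Fin m → ℝ) → ℝ} {top : (Fin m → ℝ) → Fin m}

lemma vmax_eq_of_forall_le (hm : 0 < m) {v : Fin m → ℝ} {i : Fin m} (hi : ∀ j, v j ≤ v i) :
    vmax hm v = v i :=
  le_antisymm (sup'_le _ _ fun j _ => hi j) (le_sup' v (mem_univ i))

lemma probTop_nonneg (hf : ∀ v ∈ V, 0 ≤ f v) (i : Fin m) : 0 ≤ probTop V f top i :=
  sum_nonneg fun v hv => hf v (mem_filter.mp hv).1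

lemma eq_zero_of_probTop_eq_zero (hf : ∀ v ∈ V, 0 ≤ f v) {v : Fin m → ℝ} (hv : v ∈ V)
    (hzero : probTop V f top (top v) = 0) : f v = 0 :=
  (sum_eq_zero_iff_of_nonneg fun w hw => hf w (mem_filter.mp hw).1).mp hzero v
    (mem_filter.mpr ⟨hv, rfl⟩)

lemma probTop_mul_condMean (hf : ∀ v ∈ V, 0 ≤ f v) (i j : Fin m) :
    probTop V f top i * condMean V f top i j = ∑ v ∈ V with top v = i, f v * v j := by
  -- When `probTop` vanishes, `condMean` is the junk value `0`, but so are all weights on the fibre.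
  refine mul_div_cancel_of_imp' fun hzero => sum_eq_zero fun v hv => ?_
  obtain ⟨hvV, rfl⟩ := mem_filter.mp hv
  rw [eq_zero_of_probTop_eq_zero hf hvV hzero, zero_mul]

lemma sum_probTop_mul_condMean (hf : ∀ v ∈ V, 0 ≤ f v) (choice : Fin m → Fin m) :
    ∑ i, probTop V f top i * condMean V f top i (choice i) =
      ∑ v ∈ V, f v * v (choice (top v)) := by
  rw [← sum_fiberwise V top]
  refine sum_congr rfl fun i _ => ?_
  rw [probTop_mul_condMean hf]
  refine sum_congr rfl fun v hv => ?_
  rw [(mem_filter.mp hv).2]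

lemma sum_filter_probTop_pos_mul (hf : ∀ v ∈ V, 0 ≤ f v) (p : Fin m → ℝ) :
    ∑ i with 0 < probTop V f top i, probTop V f top i * p i = ∑ i, probTop V f top i * p i :=
  sum_filter_of_ne fun i _ hne =>
    (probTop_nonneg hf i).lt_of_ne' (left_ne_zero_of_mul hne)

lemma sum_probTop_mul_price_eq_sum_mul_vmax (hm : 0 < m) (hf : ∀ v ∈ V, 0 ≤ f v)
    (htop : ∀ v ∈ V, ∀ j, v j ≤ v (top v)) {p : Fin m → ℝ}
    (hp : ∀ i, 0 < probTop V f top i → p i = condMean V f top i i) :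
    ∑ i with 0 < probTop V f top i, probTop V f top i * p i = ∑ v ∈ V, f v * vmax hm v :=
  calc ∑ i with 0 < probTop V f top i, probTop V f top i * p i
      = ∑ i with 0 < probTop V f top i, probTop V f top i * condMean V f top i i :=
        sum_congr rfl fun i hi => by rw [hp i (mem_filter.mp hi).2]
    _ = ∑ i, probTop V f top i * condMean V f top i i := sum_filter_probTop_pos_mul hf _
    _ = ∑ v ∈ V, f v * v (top v) := sum_probTop_mul_condMean hf fun i => i
    _ = ∑ v ∈ V, f v * vmax hm v :=
        sum_congr rfl fun v hv => by rw [vmax_eq_of_forall_le hm (htop v hv)]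

theorem full_surplus_of_condition_general (hm : 0 < m) (hf : ∀ v ∈ V, 0 ≤ f v)
    (htop : ∀ v ∈ V, ∀ j, v j ≤ v (top v))
    (hcond : ∀ i i' : Fin m, i ≠ i' → 0 < probTop V f top i → 0 < probTop V f top i' →
      condMean V f top i' i ≤ condMean V f top i i)
    {p : Fin m → ℝ} (hp : ∀ i, 0 < probTop V f top i → p i = condMean V f top i i) :
    (∀ i, 0 < probTop V f top i →
      condMean V f top i i - p i = 0 ∧
      ∀ i', 0 < probTop V f top i' → condMean V f top i i' - p i' ≤ 0) ∧
    ∑ i with 0 < probTop V f top i, probTop V f top i * p i = ∑ v ∈ V, f v * vmax hm v := by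
  refine ⟨fun i hi => ⟨sub_eq_zero.mpr (hp i hi).symm, fun i' hi' => ?_⟩,
    sum_probTop_mul_price_eq_sum_mul_vmax hm hf htop hp⟩
  rw [hp i' hi', sub_nonpos]
  obtain rfl | hne := eq_or_ne i' i
  · exact le_rfl
  · exact hcond i' i hne hi' hi

end

/-- if, conditional on product `i` being the top product, the posterior
mean of product `i` is maximal, then the pricing mechanism with horizontal disclosure
and prices `p i = E[v_i | i*(v) = i]` is optimally obeyed by the buyer and extracts the
full surplus `E[max_j v_j]`. -/
theorem full_surplus_of_condition (m : ℕ) (hm : 0 < m)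
    (V : Finset (Fin m → ℝ)) (f : (Fin m → ℝ) → ℝ)
    (hV : V.Nonempty)
    (hfpos : ∀ v ∈ V, 0 < f v)
    (hfzero : ∀ v, v ∉ V → f v = 0)
    (hsum : ∑ v ∈ V, f v = 1)
    (hnn : ∀ v ∈ V, ∀ i, 0 ≤ v i)
    -- every value profile in the support has a unique maximizing coordinate i*(v)
    (istar : (Fin m → ℝ) → Fin m)
    (histar : ∀ v ∈ V, ∀ j, j ≠ istar v → v j < v (istar v))
    -- the sufficient condition: E[v_i | i*(v) = i] ≥ E[v_i | i*(v) = i']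
    (hcond : ∀ i i' : Fin m, i ≠ i' →
      0 < probTop V f istar i → 0 < probTop V f istar i' →
      condMean V f istar i' i ≤ condMean V f istar i i)
    -- the prices p_i = E[v_i | i*(v) = i]
    (p : Fin m → ℝ)
    (hp : ∀ i, 0 < probTop V f istar i → p i = condMean V f istar i i) :
    -- (i) upon signal i the buyer optimally purchases product i, at zero utility
    (∀ i, 0 < probTop V f istar i →
      condMean V f istar i i - p i = 0 ∧
      (∀ i', 0 < probTop V f istar i' → condMean V f istar i i' - p i' ≤ 0)) ∧
    -- (ii) the revenue equals the full surplus E[max_j v_j]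
    (∑ i ∈ univ.filter (fun i => 0 < probTop V f istar i), probTop V f istar i * p i =
      ∑ v ∈ V, f v * vmax hm v) := by
  have hmax : ∀ v ∈ V, ∀ j, v j ≤ v (istar v) := fun v hv j =>
    (eq_or_ne j (istar v)).elim (fun heq => (congrArg v heq).le) fun hne => (histar v hv j hne).le
  exact full_surplus_of_condition_general hm (fun v hv => (hfpos v hv).le) hmax hcond hp

end Screening
end
end
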